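/- arXiv:2406.13780 — 2 statements merged into one kernel-verified Lean document; each statement's English description precedes it below -/
import Mathlib

section
/- For every integer k ≥ 2 there exist constants c, C > 0 and N such that for every integer n > N, c · n^{1/3}(log n)^{2/3} ≤ f_{C_{2k},K_4}(n) ≤ C · n^{k/(3k−3)}(log n)^{4k/(3k−3)}, and the same lower and upper bounds hold for f_{C_{2k−1},K_4}(n). -/
/-!
**Lower bound.** An independent set contains no cycle, so it suffices to find in every `K₄`-free
graph on `n` vertices an independent set of order `n^{1/3} (log n)^{2/3}`. The tool is
`exists_ind_locally_sparse`: a graph of maximum degree at most `d` in which every neighbourhood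
induces maximum degree at most `t` has an independent set of size at least
`n log (d / 2t) / (16 d)`. It follows by averaging over a random independent set drawn from the
hard-core model with fugacity `1 / 2t`. Now put `a³ = n` and `b³ = log n`. A vertex of degree more
than `a² b` has a large triangle-free neighbourhood, in which the same tool applies with `t = 1`;
an edge with more than `a b²` common neighbours gives an independent set at once; in the remaining
case the tool applies with `d = a² b` and `t = a b²` (`exists_ind_K4_free`).

**Upper bound.** Two ingredients are combined in `minFIndep_upper`.

* `cycle_ramsey`: for `l = 2k - 1` or `l = 2k`, a graph without a cycle of length `l` and without
  independent sets larger than `t` has `O(t^{k/(k-1)})` vertices. In a breadth-first search tree,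
  a layer at distance at most `k - 1` from the root can be coloured with boundedly many colours,
  because long monotone chains of edges inside a layer close up through the tree to cycles of
  every suitable length. Hence a layer of size `N` has an independent set of order `N`, the layers
  cannot grow by a factor of order `t^{1/(k-1)}` for `k - 1` steps, and one removes a slowly
  growing layer with its two neighbouring layers and repeats.

* `exists_K4_free_graph`: there are `K₄`-free graphs on `n` vertices whose independent sets have
  order at most `n^{1/3} (log n)^{4/3}`. Take as vertices the nonisotropic, nonvertical lines of the
  affine plane of order `q²`, and as points the affine points of a Hermitian curve. At every point
  split the lines through it at random into two classes, and join two lines meeting in a point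
  that separates them. The Hermitian unital contains no O'Nan configuration (four lines meeting
  pairwise in six distinct points), which makes this graph `K₄`-free (`bipGraph_K4_free`). With
  positive probability every set `X` of at least `16 q²` lines contains a vertex with at least
  `|X| / 32q` neighbours in `X` (`exists_coloring`). Picking such vertices greedily bounds the
  hard-core partition function (`hcZ_le_container`), hence the number of independent sets of a
  given size, and one class of a random partition of the lines into about `q / (log q)²` classes
  contains no independent set of order `q (log q)²` (`exists_part`, `exists_K4_free_of_prime`).

An `l`-cycle-free vertex set in the second graph thus has size of order at most
`(n^{1/3} (log n)^{4/3})^{k/(k-1)}`, which is the asserted bound.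
-/

/-- `G` contains a copy of `F` as a (not necessarily induced) subgraph, i.e. there is an
injective graph homomorphism from `F` to `G`. -/
def ContainsCopy {α β : Type*} (F : SimpleGraph α) (G : SimpleGraph β) : Prop :=
  ∃ f : α → β, Function.Injective f ∧ ∀ ⦃a b : α⦄, F.Adj a b → G.Adj (f a) (f b)

/-- The `F`-independence number of a finite graph `G`: the maximum size of a set `S` of
vertices such that the induced subgraph `G[S]` contains no copy of `F`. -/
noncomputable def fIndepNum {α β : Type*} [Fintype β] (F : SimpleGraph α) (G : SimpleGraph β) :
    ℕ :=
  sSup {k | ∃ S : Finset β, S.card = k ∧ ¬ ContainsCopy F (G.induce (S : Set β))}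

/-- `f_{F,H}(n)`: the minimum of the `F`-independence number over all `H`-free graphs on
`n` vertices. -/
noncomputable def minFIndep {α γ : Type*} (F : SimpleGraph α) (H : SimpleGraph γ) (n : ℕ) : ℕ :=
  sInf {k | ∃ G : SimpleGraph (Fin n), ¬ ContainsCopy H G ∧ fIndepNum F G = k}

/-- The Turán number `ex(n, F)`: the maximum number of edges of an `F`-free graph on `n`
vertices. -/
noncomputable def turanNum (n : ℕ) {α : Type*} (F : SimpleGraph α) : ℕ :=
  sSup {k | ∃ G : SimpleGraph (Fin n), ¬ ContainsCopy F G ∧ k = Nat.card G.edgeSet}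

namespace ER
open Finset
open scoped Classical

/-! ### The hard-core model on locally sparse graphs -/

/-- The neighbours of `v` that lie in `S`. -/
noncomputable def nb {V : Type*} (G : SimpleGraph V) (S : Finset V) (v : V) : Finset V :=
  S.filter (fun u => G.Adj v u)

/-- The independent sets of `G` contained in `S`. -/
noncomputable def indSets {V : Type*} (G : SimpleGraph V) (S : Finset V) : Finset (Finset V) :=
  S.powerset.filter (fun I => ∀ u ∈ I, ∀ v ∈ I, ¬ G.Adj u v)

/-- The partition function of the hard-core model with fugacity `l` on `G[S]`, i.e. the sum of
`l ^ |I|` over the independent sets `I ⊆ S`. -/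
noncomputable def hcZ {V : Type*} (G : SimpleGraph V) (l : ℝ) (S : Finset V) : ℝ :=
  ∑ I ∈ indSets G S, l ^ I.card

lemma mem_nb {V : Type*} {G : SimpleGraph V} {S : Finset V} {v u : V} :
    u ∈ nb G S v ↔ u ∈ S ∧ G.Adj v u := by simp [nb]

lemma mem_indSets {V : Type*} {G : SimpleGraph V} {S I : Finset V} :
    I ∈ indSets G S ↔ I ⊆ S ∧ ∀ u ∈ I, ∀ v ∈ I, ¬ G.Adj u v := by simp [indSets]

lemma empty_mem_indSets {V : Type*} (G : SimpleGraph V) (S : Finset V) : ∅ ∈ indSets G S := by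
  simp [mem_indSets]

lemma one_le_hcZ {V : Type*} (G : SimpleGraph V) {l : ℝ} (hl : 0 ≤ l) (S : Finset V) :
    1 ≤ hcZ G l S := by
  have := Finset.single_le_sum (f := fun I : Finset V => l ^ I.card)
    (fun i _ => by positivity) (empty_mem_indSets G S)
  simpa [hcZ] using this

lemma sum_powerset_pow {V : Type*} (Y : Finset V) (l : ℝ) :
    ∑ A ∈ Y.powerset, l ^ A.card = (1 + l) ^ Y.card := by
  have := Finset.sum_pow_mul_eq_add_pow l 1 Y
  simpa [add_comm] using this

/-- Deleting `Y` costs at most a factor `(1 + l) ^ |Y|`, since `I ↦ (I ∩ Y, I \ Y)` is injective. -/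
lemma hcZ_le_mul {V : Type*} (G : SimpleGraph V) {l : ℝ} (hl : 0 ≤ l) (S Y : Finset V) :
    hcZ G l S ≤ (1 + l) ^ Y.card * hcZ G l (S \ Y) := by
  rw [← sum_powerset_pow, hcZ, hcZ, Finset.sum_mul_sum, ← Finset.sum_product']
  have hinj : Set.InjOn (fun I : Finset V => (I ∩ Y, I \ Y)) (indSets G S : Set (Finset V)) := by
    intro I _ J _ h
    simp only [Prod.mk.injEq] at h
    rw [← Finset.sdiff_union_inter I Y, ← Finset.sdiff_union_inter J Y, h.1, h.2]
  calc ∑ I ∈ indSets G S, l ^ I.card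
      = ∑ I ∈ indSets G S, l ^ (I ∩ Y).card * l ^ (I \ Y).card := by
        refine Finset.sum_congr rfl fun I _ => ?_
        rw [← pow_add, add_comm, Finset.card_sdiff_add_card_inter]
    _ = ∑ p ∈ (indSets G S).image (fun I : Finset V => (I ∩ Y, I \ Y)),
          l ^ p.1.card * l ^ p.2.card := by
        rw [Finset.sum_image hinj]
    _ ≤ _ := by
        refine Finset.sum_le_sum_of_subset_of_nonneg ?_ (fun _ _ _ => by positivity)
        intro p hp
        obtain ⟨I, hI, rfl⟩ := Finset.mem_image.1 hp
        rw [mem_indSets] at hI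
        simp only [Finset.mem_product, Finset.mem_powerset, mem_indSets]
        refine ⟨Finset.inter_subset_right, Finset.sdiff_subset_sdiff hI.1 le_rfl, ?_⟩
        intro u hu v hv
        exact hI.2 u (Finset.mem_sdiff.1 hu).1 v (Finset.mem_sdiff.1 hv).1

lemma hcZ_le_pow {V : Type*} (G : SimpleGraph V) {l : ℝ} (hl : 0 ≤ l) (S : Finset V) :
    hcZ G l S ≤ (1 + l) ^ S.card := by
  have := hcZ_le_mul G hl S S
  have h0 : hcZ G l (S \ S) = 1 := by
    simp [hcZ, indSets, Finset.filter_singleton]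
  rwa [h0, mul_one] at this

/-- Independent sets through `u` correspond to independent sets avoiding the closed neighbourhood
of `u`. -/
lemma sum_indSets_mem {V : Type*} (G : SimpleGraph V) (l : ℝ) (S : Finset V) {u : V}
    (hu : u ∈ S) :
    ∑ I ∈ (indSets G S).filter (fun I => u ∈ I), l ^ I.card
      = l * hcZ G l (S \ insert u (nb G S u)) := by
  rw [hcZ, Finset.mul_sum]
  refine Finset.sum_bij' (fun I _ => I.erase u) (fun J _ => insert u J) ?_ ?_ ?_ ?_ ?_
  · intro I hI
    simp only [Finset.mem_filter, mem_indSets] at hI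
    obtain ⟨⟨hIS, hI⟩, huI⟩ := hI
    rw [mem_indSets]
    constructor
    · intro x hx
      have hx' := Finset.mem_erase.1 hx
      simp only [Finset.mem_sdiff, Finset.mem_insert, mem_nb, not_or, not_and]
      exact ⟨hIS hx'.2, hx'.1, fun _ => hI u huI x hx'.2⟩
    · intro x hx y hy
      exact hI x (Finset.mem_erase.1 hx).2 y (Finset.mem_erase.1 hy).2
  · intro J hJ
    rw [mem_indSets] at hJ
    obtain ⟨hJS, hJ⟩ := hJ
    have hJ' : ∀ x ∈ J, x ∈ S ∧ ¬ G.Adj u x := by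
      intro x hx
      have := hJS hx
      simp only [Finset.mem_sdiff, Finset.mem_insert, mem_nb, not_or, not_and] at this
      exact ⟨this.1, this.2.2 this.1⟩
    simp only [Finset.mem_filter, mem_indSets, Finset.mem_insert_self, and_true]
    constructor
    · intro x hx
      rcases Finset.mem_insert.1 hx with rfl | hx
      · exact hu
      · exact (hJ' x hx).1
    · intro x hx y hy
      rcases Finset.mem_insert.1 hx with hx | hx <;> rcases Finset.mem_insert.1 hy with hy | hy
      · rw [hx, hy]; exact G.loopless.irrefl _
      · rw [hx]; exact (hJ' y hy).2
      · rw [hy]; exact fun h => (hJ' x hx).2 h.symm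
      · exact hJ x hx y hy
  · intro I hI
    exact Finset.insert_erase (Finset.mem_filter.1 hI).2
  · intro J hJ
    refine Finset.erase_insert ?_
    intro huJ
    have := (mem_indSets.1 hJ).1 huJ
    simp at this
  · intro I hI
    have := Finset.card_erase_add_one (Finset.mem_filter.1 hI).2
    rw [← this, pow_succ, mul_comm]

/-- If `G[X]` has maximum degree at most `t` and `l (t + 1) ≤ 1`, then the expected size of a
random independent set in the hard-core model on `X` is at least `log Z / 3`: each vertex is chosen
with probability at least `l / 3`, and `log Z ≤ l |X|`. -/
lemma sum_card_ge {V : Type*} (G : SimpleGraph V) {l : ℝ} (hl : 0 < l) (X : Finset V) (t : ℝ)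
    (hlt : l * (t + 1) ≤ 1)
    (hX : ∀ u ∈ X, ((nb G X u).card : ℝ) ≤ t) :
    hcZ G l X * Real.log (hcZ G l X) ≤ 3 * ∑ I ∈ indSets G X, l ^ I.card * (I.card : ℝ) := by
  have h1 : ∑ I ∈ indSets G X, l ^ I.card * (I.card : ℝ)
      = ∑ u ∈ X, ∑ I ∈ (indSets G X).filter (fun I => u ∈ I), l ^ I.card := by
    simp_rw [Finset.sum_filter]
    rw [Finset.sum_comm]
    refine Finset.sum_congr rfl fun I hI => ?_
    rw [← Finset.sum_filter, Finset.filter_mem_eq_inter,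
      Finset.inter_eq_right.2 (mem_indSets.1 hI).1, Finset.sum_const, nsmul_eq_mul, mul_comm]
  have hZ1 := one_le_hcZ G hl.le X
  have h2 : ∀ u ∈ X, l * hcZ G l X / 3 ≤
      ∑ I ∈ (indSets G X).filter (fun I => u ∈ I), l ^ I.card := by
    intro u hu
    rw [sum_indSets_mem G l X hu]
    have h3 := hcZ_le_mul G hl.le X (insert u (nb G X u))
    have h4 : (1 + l) ^ (insert u (nb G X u)).card ≤ 3 := by
      calc (1 + l) ^ (insert u (nb G X u)).card
          ≤ (Real.exp l) ^ (insert u (nb G X u)).card := by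
            gcongr; linarith [Real.add_one_le_exp l]
        _ = Real.exp ((insert u (nb G X u)).card * l) := by rw [Real.exp_nat_mul]
        _ ≤ Real.exp 1 := by
            apply Real.exp_le_exp.2
            have : ((insert u (nb G X u)).card : ℝ) ≤ t + 1 := by
              have := Finset.card_insert_le u (nb G X u)
              have h5 : ((insert u (nb G X u)).card : ℝ) ≤ (nb G X u).card + 1 := by
                exact_mod_cast this
              linarith [hX u hu]
            nlinarith
        _ ≤ 3 := by linarith [Real.exp_one_lt_d9]
    have h5 := one_le_hcZ G hl.le (X \ insert u (nb G X u))
    have : hcZ G l X ≤ 3 * hcZ G l (X \ insert u (nb G X u)) := h3.trans (by gcongr)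
    nlinarith
  have h6 : Real.log (hcZ G l X) ≤ X.card * l := by
    have : hcZ G l X ≤ Real.exp (X.card * l) := by
      rw [Real.exp_nat_mul]
      refine (hcZ_le_pow G hl.le X).trans ?_
      gcongr; linarith [Real.add_one_le_exp l]
    calc _ ≤ Real.log (Real.exp (X.card * l)) := Real.log_le_log (by linarith) this
      _ = _ := Real.log_exp _
  rw [h1]
  have h7 := Finset.sum_le_sum h2
  rw [Finset.sum_const, nsmul_eq_mul] at h7
  nlinarith

/-- The conditional estimate behind `fiber_ineq`. Here `X` is the set of neighbours of a vertex `v`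
that are still available; on the left, the weights `l` and `Z(X)` stand for choosing `v` and for
choosing an independent subset of `X`. Either `Z(X)` is large and `X` contributes many vertices, or
`Z(X)` is small and `v` itself is chosen often. -/
lemma local_ineq {V : Type*} (G : SimpleGraph V) {l : ℝ} (hl : 0 < l) (X : Finset V) (t d : ℝ)
    (hlt : l * (t + 1) ≤ 1) (ht : 0 ≤ t) (hd : 1 ≤ d * l)
    (hX : ∀ u ∈ X, ((nb G X u).card : ℝ) ≤ t) :
    Real.log (d * l) / 8 * (l + hcZ G l X) ≤
      d * l + ∑ I ∈ indSets G X, l ^ I.card * (I.card : ℝ) := by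
  have h1 := sum_card_ge G hl X t hlt hX
  have hZ1 := one_le_hcZ G hl.le X
  set Z := hcZ G l X
  set K := Real.log (d * l) / 8 with hK
  have hK0 : 0 ≤ K := by have := Real.log_nonneg hd; positivity
  have hl1 : l ≤ 1 := by nlinarith
  set E := ∑ I ∈ indSets G X, l ^ I.card * (I.card : ℝ)
  have hE : 0 ≤ E := Finset.sum_nonneg fun _ _ => by positivity
  have hdl : d * l = Real.exp (8 * K) := by
    rw [hK, mul_div_cancel₀ _ (by norm_num), Real.exp_log (by linarith)]
  have h2 : K * (l + Z) ≤ 2 * K * Z := by nlinarith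
  -- The two cases balance because `Z ≤ exp (6 K)` while `d l = exp (8 K)`.
  by_cases hc : 6 * K ≤ Real.log Z
  · nlinarith
  · push Not at hc
    have hZ : Z ≤ Real.exp (6 * K) := by
      rw [← Real.log_le_iff_le_exp (by linarith)]; exact hc.le
    have h3 : 2 * K ≤ Real.exp (2 * K) := by linarith [Real.add_one_le_exp (2 * K)]
    have h4 : Real.exp (8 * K) = Real.exp (2 * K) * Real.exp (6 * K) := by
      rw [← Real.exp_add]; ring_nf
    have : 2 * K * Z ≤ d * l := by
      rw [hdl, h4]; gcongr
    linarith

/-- Conditionally on the part `J` of the random independent set `I` outside the closed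
neighbourhood of `v`, the expectation of `d · 1[v ∈ I] + |I ∩ N(v)|` is at least `log (d l) / 8`.
Given `J`, the rest of `I` is either `{v}` or an independent subset of the neighbours of `v` that
have no neighbour in `J`. -/
lemma fiber_ineq {V : Type*} (G : SimpleGraph V) {l : ℝ} (hl : 0 < l) (S : Finset V) (t d : ℝ)
    (hlt : l * (t + 1) ≤ 1) (ht : 0 ≤ t) (hd : 1 ≤ d * l)
    (hS : ∀ v ∈ S, ∀ u ∈ nb G S v, ((nb G (nb G S v) u).card : ℝ) ≤ t) {v : V} (hv : v ∈ S)
    (J : Finset V) (hJ : J ∈ indSets G (S \ insert v (nb G S v))) :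
    Real.log (d * l) / 8 *
      ∑ I ∈ (indSets G S).filter (fun I => I \ insert v (nb G S v) = J), l ^ I.card ≤
      ∑ I ∈ (indSets G S).filter (fun I => I \ insert v (nb G S v) = J),
        l ^ I.card * ((if v ∈ I then d else 0) + ((nb G I v).card : ℝ)) := by
  have hJm := mem_indSets.1 hJ
  set X := (nb G S v).filter (fun u => ∀ w ∈ J, ¬ G.Adj w u) with hXdef
  have hvN : v ∉ nb G S v := by simp [mem_nb]
  have hJd : ∀ x ∈ J, x ∈ S ∧ x ≠ v ∧ ¬ G.Adj v x := by
    intro x hx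
    have := hJm.1 hx
    simp only [Finset.mem_sdiff, Finset.mem_insert, mem_nb, not_or, not_and] at this
    exact ⟨this.1, this.2.1, this.2.2 this.1⟩
  have hXd : ∀ x ∈ X, x ∈ S ∧ G.Adj v x ∧ ∀ w ∈ J, ¬ G.Adj w x := by
    intro x hx
    rw [hXdef, Finset.mem_filter, mem_nb] at hx
    exact ⟨hx.1.1, hx.1.2, hx.2⟩
  have hvJ : v ∉ J := fun h => (hJd v h).2.1 rfl
  have hdisj : ∀ I ∈ indSets G X, Disjoint J I := by
    intro I hI
    rw [Finset.disjoint_left]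
    intro x hxJ hxI
    exact (hJd x hxJ).2.2 (hXd x ((mem_indSets.1 hI).1 hxI)).2.1
  -- The fibre over `J` consists of `J ∪ {v}` and of the sets `J ∪ I` with `I ⊆ X` independent.
  have hfib : (indSets G S).filter (fun I => I \ insert v (nb G S v) = J)
      = insert (insert v J) ((indSets G X).image (fun I => J ∪ I)) := by
    ext I
    simp only [Finset.mem_filter, Finset.mem_insert, Finset.mem_image]
    constructor
    · rintro ⟨hI, hIJ⟩
      rw [mem_indSets] at hI
      have hJI : J ⊆ I := hIJ ▸ Finset.sdiff_subset
      by_cases hvI : v ∈ I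
      · left
        ext x
        constructor
        · intro hx
          by_cases hxv : x = v
          · simp [hxv]
          · refine Finset.mem_insert_of_mem ?_
            rw [← hIJ]
            simp only [Finset.mem_sdiff, Finset.mem_insert, mem_nb, not_or, not_and]
            exact ⟨hx, hxv, fun _ => hI.2 v hvI x hx⟩
        · intro hx
          rcases Finset.mem_insert.1 hx with hx | hx
          · rwa [hx]
          · exact hJI hx
      · right
        refine ⟨I \ J, ?_, by simp [hJI]⟩
        rw [mem_indSets]
        constructor
        · intro x hx
          rw [Finset.mem_sdiff] at hx
          have hxv : x ≠ v := fun h => hvI (h ▸ hx.1)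
          have h1 : x ∉ I \ insert v (nb G S v) := by rw [hIJ]; exact hx.2
          simp only [Finset.mem_sdiff, Finset.mem_insert, not_and, not_not] at h1
          rw [hXdef, Finset.mem_filter]
          refine ⟨(h1 hx.1).resolve_left hxv, fun w hw => hI.2 w (hJI hw) x hx.1⟩
        · intro x hx y hy
          exact hI.2 x (Finset.mem_sdiff.1 hx).1 y (Finset.mem_sdiff.1 hy).1
    · rintro (rfl | ⟨I', hI', rfl⟩)
      · refine ⟨?_, ?_⟩
        · rw [mem_indSets]
          constructor
          · intro x hx
            rcases Finset.mem_insert.1 hx with hx | hx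
            · rwa [hx]
            · exact (hJd x hx).1
          · intro x hx y hy
            rcases Finset.mem_insert.1 hx with hx | hx <;>
              rcases Finset.mem_insert.1 hy with hy | hy
            · rw [hx, hy]; exact G.loopless.irrefl _
            · rw [hx]; exact (hJd y hy).2.2
            · rw [hy]; exact fun h => (hJd x hx).2.2 h.symm
            · exact hJm.2 x hx y hy
        · ext x
          simp only [Finset.mem_sdiff, Finset.mem_insert, mem_nb, not_or, not_and]
          constructor
          · rintro ⟨h1, h2, _⟩
            exact h1.resolve_left h2
          · intro hx
            exact ⟨Or.inr hx, (hJd x hx).2.1, fun _ => (hJd x hx).2.2⟩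
      · have hI2 := mem_indSets.1 hI'
        refine ⟨?_, ?_⟩
        · rw [mem_indSets]
          constructor
          · intro x hx
            rcases Finset.mem_union.1 hx with hx | hx
            · exact (hJd x hx).1
            · exact (hXd x (hI2.1 hx)).1
          · intro x hx y hy
            rcases Finset.mem_union.1 hx with hx | hx <;>
              rcases Finset.mem_union.1 hy with hy | hy
            · exact hJm.2 x hx y hy
            · exact (hXd y (hI2.1 hy)).2.2 x hx
            · exact fun h => (hXd x (hI2.1 hx)).2.2 y hy h.symm
            · exact hI2.2 x hx y hy
        · ext x
          simp only [Finset.mem_sdiff, Finset.mem_insert, mem_nb, not_or, not_and,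
            Finset.mem_union]
          constructor
          · rintro ⟨h1 | h1, h2, h3⟩
            · exact h1
            · exact absurd (hXd x (hI2.1 h1)).2.1 (h3 (hXd x (hI2.1 h1)).1)
          · intro hx
            exact ⟨Or.inl hx, (hJd x hx).2.1, fun _ => (hJd x hx).2.2⟩
  have hnot : insert v J ∉ (indSets G X).image (fun I => J ∪ I) := by
    intro h
    obtain ⟨I, hI, h⟩ := Finset.mem_image.1 h
    have : v ∈ J ∪ I := by rw [h]; simp
    rcases Finset.mem_union.1 this with h | h
    · exact hvJ h
    · exact G.loopless.irrefl _ (hXd v ((mem_indSets.1 hI).1 h)).2.1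
  have hinj : Set.InjOn (fun I : Finset V => J ∪ I) (indSets G X : Set (Finset V)) := by
    intro A hA B hB h
    have hA' := hdisj A hA
    have hB' := hdisj B hB
    simp only at h
    rw [← Finset.union_sdiff_cancel_left hA', h, Finset.union_sdiff_cancel_left hB']
  rw [hfib, Finset.sum_insert hnot, Finset.sum_insert hnot, Finset.sum_image hinj,
    Finset.sum_image hinj]
  have hXt : ∀ u ∈ X, ((nb G X u).card : ℝ) ≤ t := by
    intro u hu
    refine le_trans ?_ (hS v hv u (Finset.mem_filter.1 hu).1)
    exact_mod_cast Finset.card_le_card (Finset.filter_subset_filter _ (Finset.filter_subset _ _))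
  have key := local_ineq G hl X t d hlt ht hd hXt
  have e1 : ∑ I ∈ indSets G X, l ^ (J ∪ I).card = l ^ J.card * hcZ G l X := by
    rw [hcZ, Finset.mul_sum]
    refine Finset.sum_congr rfl fun I hI => ?_
    rw [Finset.card_union_of_disjoint (hdisj I hI), pow_add]
  have e2 : ∑ I ∈ indSets G X, l ^ (J ∪ I).card *
      ((if v ∈ J ∪ I then d else 0) + ((nb G (J ∪ I) v).card : ℝ))
      = l ^ J.card * ∑ I ∈ indSets G X, l ^ I.card * (I.card : ℝ) := by
    rw [Finset.mul_sum]
    refine Finset.sum_congr rfl fun I hI => ?_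
    rw [Finset.card_union_of_disjoint (hdisj I hI), pow_add]
    have hIX := (mem_indSets.1 hI).1
    have hv' : v ∉ J ∪ I := by
      rw [Finset.mem_union]
      rintro (h | h)
      · exact hvJ h
      · exact G.loopless.irrefl _ (hXd v (hIX h)).2.1
    have hnb : nb G (J ∪ I) v = I := by
      ext x
      rw [mem_nb, Finset.mem_union]
      constructor
      · rintro ⟨h | h, h2⟩
        · exact absurd h2 (hJd x h).2.2
        · exact h
      · intro h
        exact ⟨Or.inr h, (hXd x (hIX h)).2.1⟩
    rw [if_neg hv', hnb]
    ring
  rw [e1, e2, Finset.card_insert_of_notMem hvJ, if_pos (Finset.mem_insert_self _ _)]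
  have hlJ : 0 < l ^ J.card := by positivity
  have hnn : (0 : ℝ) ≤ ((nb G (insert v J) v).card : ℝ) := by positivity
  calc _ = l ^ J.card * (Real.log (d * l) / 8 * (l + hcZ G l X)) := by ring
    _ ≤ l ^ J.card * (d * l + ∑ I ∈ indSets G X, l ^ I.card * (I.card : ℝ)) := by gcongr
    _ ≤ _ := by
      rw [pow_succ]
      have : 0 ≤ l ^ J.card * l * ((nb G (insert v J) v).card : ℝ) := by positivity
      linarith

/-- A graph of maximum degree at most `d` in which all neighbourhoods induce maximum degree at
most `t` has an independent set of size at least `|S| log (d / 2t) / (16 d)`. The inequality of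
`fiber_ineq` is summed over all `v`, where the weights `d · 1[v ∈ I] + |I ∩ N(v)|` add up to at
most `2 d |I|`. -/
theorem exists_ind_locally_sparse {V : Type*} (G : SimpleGraph V) (S : Finset V) (t d : ℝ)
    (ht : 1 ≤ t) (hd : 2 * t ≤ d)
    (hdeg : ∀ v ∈ S, ((nb G S v).card : ℝ) ≤ d)
    (hS : ∀ v ∈ S, ∀ u ∈ nb G S v, ((nb G (nb G S v) u).card : ℝ) ≤ t) :
    ∃ I ∈ indSets G S, (S.card : ℝ) * Real.log (d / (2 * t)) ≤ 16 * d * I.card := by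
  set l : ℝ := 1 / (2 * t) with hldef
  have hl : 0 < l := by positivity
  have hdl : d * l = d / (2 * t) := by rw [hldef]; ring
  have hlt : l * (t + 1) ≤ 1 := by
    rw [hldef, div_mul_eq_mul_div, div_le_one (by positivity)]; linarith
  have hd1 : 1 ≤ d * l := by rw [hdl, one_le_div (by positivity)]; exact hd
  set K := Real.log (d * l) / 8 with hK
  have h1 : ∀ v ∈ S, K * hcZ G l S ≤ ∑ I ∈ indSets G S,
      l ^ I.card * ((if v ∈ I then d else 0) + ((nb G I v).card : ℝ)) := by
    intro v hv
    have hmaps : ∀ I ∈ indSets G S, I \ insert v (nb G S v) ∈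
        indSets G (S \ insert v (nb G S v)) := by
      intro I hI
      rw [mem_indSets] at hI ⊢
      refine ⟨Finset.sdiff_subset_sdiff hI.1 le_rfl, fun x hx y hy => ?_⟩
      exact hI.2 x (Finset.mem_sdiff.1 hx).1 y (Finset.mem_sdiff.1 hy).1
    rw [hcZ, ← Finset.sum_fiberwise_of_maps_to hmaps,
      ← Finset.sum_fiberwise_of_maps_to hmaps, Finset.mul_sum]
    exact Finset.sum_le_sum fun J hJ =>
      fiber_ineq G hl S t d hlt (by linarith) hd1 hS hv J hJ
  have h2 := Finset.sum_le_sum h1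
  rw [Finset.sum_const, nsmul_eq_mul, Finset.sum_comm] at h2
  have h3 : ∀ I ∈ indSets G S, ∑ v ∈ S,
      l ^ I.card * ((if v ∈ I then d else 0) + ((nb G I v).card : ℝ))
      ≤ l ^ I.card * (2 * d * I.card) := by
    intro I hI
    have hIS := (mem_indSets.1 hI).1
    rw [← Finset.mul_sum, Finset.sum_add_distrib]
    gcongr
    have e1 : ∑ v ∈ S, (if v ∈ I then d else 0) = d * I.card := by
      rw [← Finset.sum_filter, Finset.filter_mem_eq_inter, Finset.inter_eq_right.2 hIS,
        Finset.sum_const, nsmul_eq_mul, mul_comm]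
    have e2 : ∑ v ∈ S, ((nb G I v).card : ℝ) ≤ d * I.card := by
      have : ∑ v ∈ S, ((nb G I v).card : ℝ) = ∑ u ∈ I, ((nb G S u).card : ℝ) := by
        have := Finset.sum_card_bipartiteAbove_eq_sum_card_bipartiteBelow
          (s := S) (t := I) (fun a b => G.Adj a b)
        have h := congrArg (fun n : ℕ => (n : ℝ)) this
        push_cast at h
        refine (Eq.trans ?_ h).trans ?_
        · rfl
        · refine Finset.sum_congr rfl fun u _ => ?_
          congr 2
          ext x
          simp [mem_nb, Finset.mem_bipartiteBelow, G.adj_comm]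
      rw [this]
      calc _ ≤ ∑ u ∈ I, d := Finset.sum_le_sum fun u hu => hdeg u (hIS hu)
        _ = _ := by rw [Finset.sum_const, nsmul_eq_mul, mul_comm]
    linarith
  have h4 := h2.trans (Finset.sum_le_sum h3)
  obtain ⟨I, hI, hmax⟩ := Finset.exists_max_image (indSets G S) Finset.card
    ⟨∅, empty_mem_indSets G S⟩
  refine ⟨I, hI, ?_⟩
  have h5 : ∑ J ∈ indSets G S, l ^ J.card * (2 * d * J.card) ≤ hcZ G l S * (2 * d * I.card) := by
    rw [hcZ, Finset.sum_mul]
    refine Finset.sum_le_sum fun J hJ => ?_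
    have : (J.card : ℝ) ≤ I.card := by exact_mod_cast hmax J hJ
    have hd0 : 0 ≤ d := by linarith
    gcongr
  have hZ := one_le_hcZ G hl.le S
  rw [← hdl]
  have h6 : hcZ G l S * (S.card * K) ≤ hcZ G l S * (2 * d * I.card) := by
    calc _ = (S.card : ℝ) * (K * hcZ G l S) := by ring
      _ ≤ _ := h4.trans h5
  have h7 := le_of_mul_le_mul_left h6 (by linarith)
  rw [hK] at h7
  linarith

/-! ### Independent sets in `K₄`-free graphs -/

/-- A triangle-free graph on at least `x` vertices has an independent set of order `√(x log x)`:
a neighbourhood if some degree is large, and otherwise one from the locally sparse case `t = 1`. -/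
lemma exists_ind_triangle_free {V : Type*} (G : SimpleGraph V) (S : Finset V) (x : ℝ)
    (hx : 16 ≤ x) (hxS : x ≤ S.card)
    (hS : ∀ u ∈ S, ∀ v ∈ S, ∀ w ∈ S, G.Adj u v → G.Adj u w → ¬ G.Adj v w) :
    ∃ I ∈ indSets G S, √(x * Real.log x) ≤ 64 * I.card := by
  have hlog : 1 ≤ Real.log x := by
    rw [Real.le_log_iff_exp_le (by linarith)]
    linarith [Real.exp_one_lt_d9]
  set d := √(x * Real.log x) with hd
  have hd2 : d ^ 2 = x * Real.log x := Real.sq_sqrt (by positivity)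
  have hsx : √x ^ 2 = x := Real.sq_sqrt (by linarith)
  have hsx4 : 4 ≤ √x := Real.le_sqrt_of_sq_le (by linarith)
  have hdx : √x ≤ d := Real.sqrt_le_sqrt (by nlinarith)
  by_cases hc : ∃ v ∈ S, d < (nb G S v).card
  · obtain ⟨v, hv, hdv⟩ := hc
    refine ⟨nb G S v, ?_, by linarith⟩
    rw [mem_indSets]
    refine ⟨Finset.filter_subset _ _, fun a ha b hb => ?_⟩
    rw [mem_nb] at ha hb
    exact hS v hv a ha.1 b hb.1 ha.2 hb.2
  · push Not at hc
    obtain ⟨I, hI, h⟩ := exists_ind_locally_sparse G S 1 d le_rfl (by linarith) hc (by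
      intro v hv u hu
      have : nb G (nb G S v) u = ∅ := by
        rw [Finset.eq_empty_iff_forall_notMem]
        intro w hw
        rw [mem_nb, mem_nb] at hw
        rw [mem_nb] at hu
        exact hS v hv u hu.1 w hw.1.1 hu.2 hw.1.2 hw.2
      simp [this])
    refine ⟨I, hI, ?_⟩
    have h1 : Real.log x ≤ 4 * Real.log (d / (2 * 1)) := by
      have h2 : x ≤ (d / (2 * 1)) ^ 4 := by
        have e : (d / (2 * 1)) ^ 4 = (d ^ 2) ^ 2 / 16 := by ring
        rw [e, hd2]
        have : x * 1 ≤ x * Real.log x := by gcongr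
        nlinarith
      have := Real.log_le_log (by linarith) h2
      rwa [Real.log_pow] at this
    have h3 : x * Real.log x ≤ 64 * d * I.card := by
      calc x * Real.log x ≤ S.card * (4 * Real.log (d / (2 * 1))) := by gcongr
        _ = 4 * (S.card * Real.log (d / (2 * 1))) := by ring
        _ ≤ 4 * (16 * d * I.card) := by gcongr
        _ = _ := by ring
    rw [← hd2] at h3
    have : d * d ≤ d * (64 * I.card) := by linarith
    exact le_of_mul_le_mul_left this (by linarith)

/-- The bound for `K₄`-free graphs, with `a` and `b` the cube roots of `|S|` and `log |S|`. -/
lemma exists_ind_K4_free_aux {V : Type*} (G : SimpleGraph V) (S : Finset V) (a b : ℝ)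
    (ha : a ^ 3 = S.card) (hb : b ^ 3 = Real.log S.card) (hb1 : 1 ≤ b) (hab : 4 * b ^ 2 ≤ a)
    (hS : ∀ u ∈ S, ∀ v ∈ S, ∀ w ∈ S, ∀ z ∈ S, G.Adj u v → G.Adj u w → G.Adj u z →
      G.Adj v w → G.Adj v z → ¬ G.Adj w z) :
    ∃ I ∈ indSets G S, a * b ^ 2 ≤ 128 * I.card := by
  have ha4 : 4 ≤ a := by nlinarith
  have hloga : 3 * Real.log a = b ^ 3 := by
    rw [hb, ← ha, Real.log_pow]; norm_num
  have h4 : 4 * b ≤ a := by nlinarith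
  by_cases hc : ∃ v ∈ S, a ^ 2 * b < (nb G S v).card
  · obtain ⟨v, hv, hdv⟩ := hc
    obtain ⟨I, hI, h⟩ := exists_ind_triangle_free G (nb G S v) (a ^ 2 * b) (by nlinarith)
      hdv.le (by
        intro u hu v' hv' w hw h1 h2 h3
        rw [mem_nb] at hu hv' hw
        exact hS v hv u hu.1 v' hv'.1 w hw.1 hu.2 hv'.2 hw.2 h1 h2 h3)
    have hII := mem_indSets.1 hI
    refine ⟨I, mem_indSets.2 ⟨hII.1.trans (Finset.filter_subset _ _), hII.2⟩, ?_⟩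
    have h5 : a * b ^ 2 / 2 ≤ √(a ^ 2 * b * Real.log (a ^ 2 * b)) := by
      apply Real.le_sqrt_of_sq_le
      rw [Real.log_mul (by positivity) (by positivity), Real.log_pow]
      have : 0 ≤ Real.log b := Real.log_nonneg hb1
      have e : Real.log a = b ^ 3 / 3 := by linarith
      rw [e]
      have h7 : a ^ 2 * b * (b ^ 3 * (2 / 3)) ≤
          a ^ 2 * b * (((2 : ℕ) : ℝ) * (b ^ 3 / 3) + Real.log b) := by
        gcongr; push_cast; linarith
      have h8 : 0 ≤ a ^ 2 * b * b ^ 3 := by positivity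
      nlinarith
    linarith
  push Not at hc
  by_cases hc2 : ∃ v ∈ S, ∃ u ∈ nb G S v, a * b ^ 2 < (nb G (nb G S v) u).card
  · obtain ⟨v, hv, u, hu, hdv⟩ := hc2
    refine ⟨nb G (nb G S v) u, ?_, ?_⟩
    · rw [mem_indSets]
      refine ⟨(Finset.filter_subset _ _).trans (Finset.filter_subset _ _), ?_⟩
      intro x hx y hy
      rw [mem_nb, mem_nb] at hx hy
      rw [mem_nb] at hu
      exact hS v hv u hu.1 x hx.1.1 y hy.1.1 hu.2 hx.1.2 hy.1.2 hx.2 hy.2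
    · have : 0 ≤ a * b ^ 2 := by positivity
      linarith
  push Not at hc2
  obtain ⟨I, hI, h⟩ := exists_ind_locally_sparse G S (a * b ^ 2) (a ^ 2 * b) (by nlinarith)
    (by nlinarith [mul_pos (show 0 < a by linarith) (show 0 < b by linarith)]) hc hc2
  refine ⟨I, hI, ?_⟩
  have e : a ^ 2 * b / (2 * (a * b ^ 2)) = a / (2 * b) := by field_simp
  rw [e] at h
  have h1 : b ^ 3 / 6 ≤ Real.log (a / (2 * b)) := by
    have h2 : a ≤ (a / (2 * b)) ^ 2 := by
      rw [div_pow, le_div_iff₀ (by positivity)]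
      nlinarith
    have := Real.log_le_log (by linarith) h2
    rw [Real.log_pow] at this
    push_cast at this
    linarith
  have h3 : a ^ 3 * (b ^ 3 / 6) ≤ 16 * (a ^ 2 * b) * I.card := by
    rw [← ha] at h
    exact le_trans (by gcongr) h
  have h5 : a ^ 2 * b * (a * b ^ 2) ≤ a ^ 2 * b * (96 * I.card) := by linarith
  have := le_of_mul_le_mul_left h5 (by positivity)
  have h0 : (0 : ℝ) ≤ I.card := by positivity
  linarith

lemma not_adj_of_K4_free {V : Type*} {G : SimpleGraph V}
    (hG : ¬ ContainsCopy (⊤ : SimpleGraph (Fin 4)) G) (u v w z : V)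
    (h1 : G.Adj u v) (h2 : G.Adj u w) (h3 : G.Adj u z) (h4 : G.Adj v w) (h5 : G.Adj v z) :
    ¬ G.Adj w z := by
  intro h6
  apply hG
  have hadj : ∀ a b : Fin 4, a ≠ b → G.Adj (![u, v, w, z] a) (![u, v, w, z] b) := by
    intro a b hab
    fin_cases a <;> fin_cases b <;>
      first | exact absurd rfl hab | assumption | (apply SimpleGraph.Adj.symm; assumption)
  refine ⟨![u, v, w, z], fun a b h => ?_, fun a b hab => hadj a b hab.ne⟩
  by_contra hab
  have := hadj a b hab
  rw [h] at this
  exact G.loopless.irrefl _ this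

open Filter in
theorem exists_ind_K4_free : ∃ N : ℕ, ∀ n > N, ∀ G : SimpleGraph (Fin n),
    ¬ ContainsCopy (⊤ : SimpleGraph (Fin 4)) G → ∃ I : Finset (Fin n),
    (∀ u ∈ I, ∀ v ∈ I, ¬ G.Adj u v) ∧
    (n : ℝ) ^ ((1 : ℝ) / 3) * Real.log n ^ ((2 : ℝ) / 3) ≤ 128 * I.card := by
  have h1 : ∀ᶠ x : ℝ in atTop, 4 * (Real.log x ^ ((1 : ℝ) / 3)) ^ 2 ≤ x ^ ((1 : ℝ) / 3) := by
    have := (isLittleO_log_rpow_rpow_atTop (2 / 3 : ℝ) (show (0 : ℝ) < 1 / 3 by norm_num)).bound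
      (show (0 : ℝ) < 1 / 4 by norm_num)
    filter_upwards [this, eventually_ge_atTop 1] with x hx hx1
    have hl := Real.log_nonneg hx1
    rw [Real.norm_of_nonneg (by positivity), Real.norm_of_nonneg (by positivity)] at hx
    rw [← Real.rpow_natCast, ← Real.rpow_mul hl]
    norm_num at hx ⊢
    linarith
  have h2 : ∀ᶠ x : ℝ in atTop, 1 ≤ Real.log x := by
    filter_upwards [Real.tendsto_log_atTop.eventually_ge_atTop 1] with x hx using hx
  obtain ⟨N, hN⟩ := eventually_atTop.1
    (tendsto_natCast_atTop_atTop.eventually (h1.and h2))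
  refine ⟨N, fun n hn G hG => ?_⟩
  obtain ⟨ha, hb⟩ := hN n hn.le
  obtain ⟨I, hI, h⟩ := exists_ind_K4_free_aux G Finset.univ ((n : ℝ) ^ ((1 : ℝ) / 3))
    (Real.log n ^ ((1 : ℝ) / 3))
    (by rw [← Real.rpow_natCast, ← Real.rpow_mul (by positivity)]; simp)
    (by rw [← Real.rpow_natCast, ← Real.rpow_mul (by positivity)]; simp)
    (Real.one_le_rpow hb (by norm_num)) ha
    (fun u _ v _ w _ z _ => not_adj_of_K4_free hG u v w z)
  refine ⟨I, (mem_indSets.1 hI).2, ?_⟩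
  have e : (Real.log n ^ ((1 : ℝ) / 3)) ^ 2 = Real.log n ^ ((2 : ℝ) / 3) := by
    rw [← Real.rpow_natCast, ← Real.rpow_mul (by linarith)]; norm_num
  rwa [e] at h

/-! ### The cycle-complete Ramsey bound -/

/-- `G` has a cycle of length `l` inside `S`, given by a closed sequence `g 0, …, g l = g 0` of
vertices of which the first `l` are distinct. Only values `l ≥ 3` are of interest. -/
def HasCycle {V : Type*} (G : SimpleGraph V) (S : Finset V) (l : ℕ) : Prop :=
  ∃ g : ℕ → V, Set.InjOn g (Set.Iio l) ∧ (∀ m < l, g m ∈ S) ∧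
    (∀ m < l, G.Adj (g m) (g (m + 1))) ∧ g l = g 0

lemma containsCopy_of_hasCycle {V : Type*} {G : SimpleGraph V} {S : Finset V} {l : ℕ}
    (h : HasCycle G S l) :
    ContainsCopy (SimpleGraph.cycleGraph l) (G.induce (S : Set V)) := by
  obtain ⟨g, hinj, hS, hadj, hl⟩ := h
  have key : ∀ a b : Fin l, (a - b).val = 1 → G.Adj (g a) (g b) := by
    intro a b hab
    have hb : b.val < l := b.2
    have ha : a.val < l := a.2
    rw [Fin.val_sub] at hab
    have hcase : a.val = b.val + 1 ∨ (a.val = 0 ∧ b.val + 1 = l) := by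
      rcases le_or_gt b.val a.val with hle | hlt
      · have : l - b.val + a.val = (a.val - b.val) + l := by omega
        rw [this, Nat.add_mod_right, Nat.mod_eq_of_lt (by omega)] at hab
        omega
      · rw [Nat.mod_eq_of_lt (by omega)] at hab
        omega
    rcases hcase with h | ⟨h0, h1⟩
    · rw [h]; exact (hadj b hb).symm
    · have e : g a = g (b + 1) := by rw [h1, hl]; exact congrArg g h0
      rw [e]; exact (hadj b hb).symm
  refine ⟨fun m => ⟨g m, hS m m.2⟩, ?_, ?_⟩
  · intro a b hab
    simp only [Subtype.mk.injEq] at hab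
    exact Fin.ext (hinj a.2 b.2 hab)
  · intro a b hab
    rw [SimpleGraph.cycleGraph_adj'] at hab
    rw [SimpleGraph.induce_adj]
    rcases hab with h | h
    · exact key a b h
    · exact (key b a h).symm

/-- A rooted tree in `G[S]`, presented by its disjoint layers: `L i` is the set of vertices at depth
`i`, and `par` maps a vertex of positive depth to a neighbour in the previous layer. The values of
`par` elsewhere are irrelevant. -/
structure Layering {V : Type*} (G : SimpleGraph V) (S : Finset V) where
  L : ℕ → Finset V
  par : V → V
  root : V
  L_zero : L 0 = {root}
  sub : ∀ i, L i ⊆ S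
  disj : ∀ i j u, u ∈ L i → u ∈ L j → i = j
  par_mem : ∀ i u, u ∈ L (i + 1) → par u ∈ L i
  par_adj : ∀ i u, u ∈ L (i + 1) → G.Adj u (par u)

namespace Layering
variable {V : Type*} {G : SimpleGraph V} {S : Finset V} (T : Layering G S)

lemma par_iter_mem (i j : ℕ) (u : V) (hu : u ∈ T.L i) (hj : j ≤ i) :
    T.par^[j] u ∈ T.L (i - j) := by
  induction j with
  | zero => simpa
  | succ j ih =>
    rw [Function.iterate_succ_apply']
    apply T.par_mem
    have : i - (j + 1) + 1 = i - j := by omega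
    rw [this]
    exact ih (by omega)

/-- An edge `u u'` inside layer `i` is an arc of level `j` if the paths from `u` and `u'` towards the
root meet for the first time after `j + 1` steps; it is oriented by the order of the `j`-th
ancestors. -/
def Arc [LinearOrder V] (i j : ℕ) (u u' : V) : Prop :=
  u ∈ T.L i ∧ u' ∈ T.L i ∧ G.Adj u u' ∧ T.par^[j + 1] u = T.par^[j + 1] u' ∧
    T.par^[j] u < T.par^[j] u'

/-- A directed chain of `s` arcs of level `j` has ends with the same ancestor `j + 1` steps up, but
with distinct ancestors below it, so that the chain and the two tree paths form a cycle of length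
`s + 2 (j + 1)`. -/
lemma hasCycle_of_chain [LinearOrder V] {i j s : ℕ} (hj : j + 1 ≤ i) (hs : 1 ≤ s) (w : ℕ → V)
    (hw : ∀ m < s, T.Arc i j (w m) (w (m + 1))) : HasCycle G S (s + 2 * (j + 1)) := by
  have hmem : ∀ m ≤ s, w m ∈ T.L i := by
    intro m hm
    rcases Nat.lt_or_ge m s with h | h
    · exact (hw m h).1
    · have : m = (s - 1) + 1 := by omega
      rw [this]
      exact (hw (s - 1) (by omega)).2.1
  have hlt : ∀ m m', m < m' → m' ≤ s → T.par^[j] (w m) < T.par^[j] (w m') := by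
    intro m m' hmm
    induction m', hmm using Nat.le_induction with
    | base => intro h; exact (hw m (by omega)).2.2.2.2
    | succ m' hm ih =>
      intro h
      exact (ih (by omega)).trans (hw m' (by omega)).2.2.2.2
  have heq : ∀ m ≤ s, T.par^[j + 1] (w m) = T.par^[j + 1] (w 0) := by
    intro m
    induction m with
    | zero => intro _; rfl
    | succ m ih => intro h; rw [← ih (by omega)]; exact (hw m (by omega)).2.2.2.1.symm
  have hneq : ∀ a ≤ j, T.par^[a] (w s) ≠ T.par^[a] (w 0) := by
    intro a ha h
    have h1 := hlt 0 s (by omega) le_rfl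
    have h2 : T.par^[j] (w s) = T.par^[j] (w 0) := by
      have : j = (j - a) + a := by omega
      rw [this, Function.iterate_add_apply, Function.iterate_add_apply, h]
    rw [h2] at h1
    exact lt_irrefl _ h1
  have m0 := hmem 0 (by omega)
  have ms := hmem s le_rfl
  -- Along the chain, up from `w s` to the common ancestor, and down again to `w 0`.
  set g : ℕ → V := fun m => if m ≤ s then w m else
    if m ≤ s + (j + 1) then T.par^[m - s] (w s) else T.par^[s + 2 * (j + 1) - m] (w 0) with hg
  have g1 : ∀ m ≤ s, g m = w m := fun m hm => by simp [hg, hm]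
  have g2 : ∀ m, s ≤ m → m ≤ s + (j + 1) → g m = T.par^[m - s] (w s) := by
    intro m h1 h2
    rcases Nat.eq_or_lt_of_le h1 with h | h
    · subst h; simp [hg]
    · simp [hg, not_le.2 h, h2]
  have g3 : ∀ m, s + (j + 1) ≤ m → g m = T.par^[s + 2 * (j + 1) - m] (w 0) := by
    intro m h1
    rcases Nat.eq_or_lt_of_le h1 with h | h
    · rw [g2 m (by omega) (by omega)]
      have e1 : m - s = j + 1 := by omega
      have e2 : s + 2 * (j + 1) - m = j + 1 := by omega
      rw [e1, e2]
      exact heq s le_rfl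
    · have h2 : ¬ m ≤ s := by omega
      simp only [hg, h2, not_le.2 h, if_false]
  have l1 : ∀ m ≤ s, g m ∈ T.L i := fun m hm => by rw [g1 m hm]; exact hmem m hm
  have l2 : ∀ m, s ≤ m → m ≤ s + (j + 1) → g m ∈ T.L (i - (m - s)) := fun m h1 h2 => by
    rw [g2 m h1 h2]; exact T.par_iter_mem i _ _ ms (by omega)
  have l3 : ∀ m, s + (j + 1) ≤ m → g m ∈ T.L (i - (s + 2 * (j + 1) - m)) := fun m h1 => by
    rw [g3 m h1]; exact T.par_iter_mem i _ _ m0 (by omega)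
  refine ⟨g, ?_, ?_, ?_, ?_⟩
  · have key : ∀ m m', m < m' → m' < s + 2 * (j + 1) → g m ≠ g m' := by
      intro m m' hmm hm' h
      rcases le_or_gt m' s with c1 | c1
      · rw [g1 m (by omega), g1 m' c1] at h
        have := hlt m m' hmm c1
        rw [h] at this
        exact lt_irrefl _ this
      rcases le_or_gt m' (s + (j + 1)) with c2 | c2
      · have a1 := l2 m' c1.le c2
        rw [← h] at a1
        rcases le_or_gt m s with c3 | c3
        · have := T.disj _ _ _ (l1 m c3) a1
          omega
        · have := T.disj _ _ _ (l2 m c3.le (by omega)) a1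
          omega
      · have a1 := l3 m' c2.le
        rw [← h] at a1
        rcases le_or_gt m s with c3 | c3
        · have := T.disj _ _ _ (l1 m c3) a1
          omega
        rcases le_or_gt m (s + (j + 1)) with c4 | c4
        · have := T.disj _ _ _ (l2 m c3.le (by omega)) a1
          rw [g2 m c3.le c4, g3 m' c2.le] at h
          have e : m - s = s + 2 * (j + 1) - m' := by omega
          rw [← e] at h
          exact hneq _ (by omega) h
        · have := T.disj _ _ _ (l3 m c4.le) a1
          omega
    intro m hm m' hm' h
    rcases lt_trichotomy m m' with c | c | c
    · exact absurd h (key m m' c hm')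
    · exact c
    · exact absurd h.symm (key m' m c hm)
  · intro m hm
    rcases le_or_gt m s with c1 | c1
    · exact T.sub _ (l1 m c1)
    rcases le_or_gt m (s + (j + 1)) with c2 | c2
    · exact T.sub _ (l2 m c1.le c2)
    · exact T.sub _ (l3 m c2.le)
  · intro m hm
    rcases lt_or_ge m s with c1 | c1
    · rw [g1 m c1.le, g1 (m + 1) c1]
      exact (hw m c1).2.2.1
    rcases lt_or_ge m (s + (j + 1)) with c2 | c2
    · have a := l2 m c1 c2.le
      have e : m + 1 - s = (m - s) + 1 := by omega
      rw [g2 m c1 c2.le, g2 (m + 1) (by omega) (by omega), e, Function.iterate_succ_apply']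
      rw [g2 m c1 c2.le] at a
      have e2 : i - (m - s) = (i - (m - s) - 1) + 1 := by omega
      rw [e2] at a
      exact T.par_adj _ _ a
    · have a := l3 (m + 1) (by omega)
      have e : s + 2 * (j + 1) - m = (s + 2 * (j + 1) - (m + 1)) + 1 := by omega
      rw [g3 m c2, e, g3 (m + 1) (by omega), Function.iterate_succ_apply']
      rw [g3 (m + 1) (by omega)] at a
      have e2 : i - (s + 2 * (j + 1) - (m + 1)) = (i - (s + 2 * (j + 1) - (m + 1)) - 1) + 1 := by
        omega
      rw [e2] at a
      exact (T.par_adj _ _ a).symm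
  · rw [g3 _ (by omega), g1 0 (by omega)]
    simp

/-- There is a directed chain of `s` arcs of level `j` in layer `i` that ends at `u`. -/
def ChainTo [LinearOrder V] (i j : ℕ) (u : V) (s : ℕ) : Prop :=
  ∃ w : ℕ → V, w s = u ∧ ∀ m < s, T.Arc i j (w m) (w (m + 1))

/-- The length of the longest chain of arcs of level `j` that ends at `u`, truncated at the length
`l - 2 (j + 1)` at which a chain would close up to a cycle of length `l`. -/
noncomputable def col [LinearOrder V] (i j l : ℕ) (u : V) : ℕ :=
  Nat.findGreatest (T.ChainTo i j u) (l - 2 * (j + 1))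

lemma col_lt [LinearOrder V] {i j l : ℕ} (hl : 1 ≤ l) (u : V) : T.col i j l u < l := by
  have := Nat.findGreatest_le (P := T.ChainTo i j u) (l - 2 * (j + 1))
  unfold col
  omega

/-- In the absence of `l`-cycles the truncation in `col` is never attained, so `col` increases
strictly along arcs. -/
lemma col_lt_col [LinearOrder V] {i j l : ℕ} (hj : j + 1 ≤ i) (hl : 2 * i + 1 ≤ l)
    (hC : ¬ HasCycle G S l) {u u' : V} (h : T.Arc i j u u') :
    T.col i j l u < T.col i j l u' := by
  have h0 : T.ChainTo i j u 0 := ⟨fun _ => u, rfl, fun m hm => absurd hm (by omega)⟩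
  have h1 : T.ChainTo i j u (T.col i j l u) :=
    Nat.findGreatest_spec (P := T.ChainTo i j u) (Nat.zero_le _) h0
  have hle : T.col i j l u ≤ l - 2 * (j + 1) := Nat.findGreatest_le _
  have hne : T.col i j l u ≠ l - 2 * (j + 1) := by
    intro he
    obtain ⟨w, -, hw⟩ := h1
    have := T.hasCycle_of_chain hj (by omega) w hw
    rw [he] at this
    apply hC
    convert this using 1
    omega
  have h2 : T.ChainTo i j u' (T.col i j l u + 1) := by
    obtain ⟨w, hwu, hw⟩ := h1
    refine ⟨fun m => if m ≤ T.col i j l u then w m else u', by simp, fun m hm => ?_⟩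
    rcases Nat.lt_or_ge m (T.col i j l u) with c | c
    · have c' : m + 1 ≤ T.col i j l u := c
      simp only [c.le, c', if_true]
      exact hw m c
    · have : m = T.col i j l u := by omega
      subst this
      simp only [le_refl, if_true, Nat.not_succ_le_self, if_false]
      rw [hwu]; exact h
  exact Nat.le_findGreatest (by omega) h2

/-- Every edge inside layer `i` is an arc of some level `j < i` in one of its two directions, so the
vector of all the colours `col` is a proper colouring of the layer with `l ^ i` colours. -/
lemma exists_ind_layer [LinearOrder V] {i l : ℕ} (hl : 2 * i + 1 ≤ l) (hC : ¬ HasCycle G S l) :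
    ∃ I ⊆ T.L i, (∀ u ∈ I, ∀ v ∈ I, ¬ G.Adj u v) ∧ (T.L i).card ≤ l ^ i * I.card := by
  set c : V → (Fin i → Fin l) := fun u j => ⟨T.col i j l u, T.col_lt (by omega) u⟩ with hc
  obtain ⟨y, -, hy⟩ := Finset.exists_max_image (Finset.univ : Finset (Fin i → Fin l))
    (fun y => ((T.L i).filter (fun u => c u = y)).card)
    ⟨fun _ => ⟨0, by omega⟩, Finset.mem_univ _⟩
  refine ⟨(T.L i).filter (fun u => c u = y), Finset.filter_subset _ _, ?_, ?_⟩
  · have key : ∀ u ∈ (T.L i).filter (fun u => c u = y), ∀ v ∈ (T.L i).filter (fun u => c u = y),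
        ∀ j : ℕ, j + 1 ≤ i → ¬ T.Arc i j u v := by
      intro u hu v hv j hj h
      have h1 := T.col_lt_col hj hl hC h
      have h2 : c u = c v := by rw [(Finset.mem_filter.1 hu).2, (Finset.mem_filter.1 hv).2]
      have h3 := congrArg Fin.val (congrFun h2 ⟨j, hj⟩)
      simp only [hc] at h3
      omega
    intro u hu v hv huv
    have hu' := (Finset.mem_filter.1 hu).1
    have hv' := (Finset.mem_filter.1 hv).1
    have hex : ∃ j, T.par^[j] u = T.par^[j] v := by
      refine ⟨i, ?_⟩
      have a := T.par_iter_mem i i u hu' le_rfl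
      have b := T.par_iter_mem i i v hv' le_rfl
      rw [Nat.sub_self, T.L_zero, Finset.mem_singleton] at a b
      rw [a, b]
    have hji : Nat.find hex ≤ i := by
      apply Nat.find_min'
      have a := T.par_iter_mem i i u hu' le_rfl
      have b := T.par_iter_mem i i v hv' le_rfl
      rw [Nat.sub_self, T.L_zero, Finset.mem_singleton] at a b
      rw [a, b]
    have hspec := Nat.find_spec hex
    have hmin := fun m => Nat.find_min hex (m := m)
    rcases hjj : Nat.find hex with _ | j
    · rw [hjj] at hspec
      simp only [Function.iterate_zero, id] at hspec
      rw [hspec] at huv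
      exact G.loopless.irrefl _ huv
    · rw [hjj] at hspec hji
      have hne := hmin j (by omega)
      rcases lt_or_gt_of_ne hne with hlt | hlt
      · exact key u hu v hv j hji ⟨hu', hv', huv, hspec, hlt⟩
      · exact key v hv u hu j hji ⟨hv', hu', huv.symm, hspec.symm, hlt⟩
  · rw [Finset.card_eq_sum_card_fiberwise (f := c) (t := Finset.univ) (fun _ _ => by simp)]
    refine (Finset.sum_le_card_nsmul _ _ _ hy).trans ?_
    simp

end Layering

/-- The vertices of `S` with a neighbour in `B`. -/
noncomputable def nbhd {V : Type*} (G : SimpleGraph V) (S B : Finset V) : Finset V :=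
  S.filter (fun u => ∃ w ∈ B, G.Adj u w)

lemma mem_nbhd {V : Type*} {G : SimpleGraph V} {S B : Finset V} {u : V} :
    u ∈ nbhd G S B ↔ u ∈ S ∧ ∃ w ∈ B, G.Adj u w := by simp [nbhd]

/-- `ball G S v j` is the set of vertices at distance less than `j` from `v` in `G[S]`; the index is
shifted so that `ball G S v 0` is empty and all layers are differences of consecutive balls. -/
noncomputable def ball {V : Type*} (G : SimpleGraph V) (S : Finset V) (v : V) : ℕ → Finset V
  | 0 => ∅
  | j + 1 => if j = 0 then {v} else
      ball G S v j ∪ nbhd G S (ball G S v j)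

section ball
variable {V : Type*} (G : SimpleGraph V) (S : Finset V) (v : V)

lemma ball_zero : ball G S v 0 = ∅ := rfl
lemma ball_one : ball G S v 1 = {v} := by simp [ball]
lemma ball_succ (j : ℕ) : ball G S v (j + 2) =
    ball G S v (j + 1) ∪ nbhd G S (ball G S v (j + 1)) := by
  rw [ball]; simp

lemma ball_mono : Monotone (ball G S v) := by
  apply monotone_nat_of_le_succ
  intro j
  cases j with
  | zero => rw [ball_zero]; exact Finset.empty_subset _
  | succ j => rw [ball_succ]; exact Finset.subset_union_left

lemma ball_sub (hv : v ∈ S) (j : ℕ) : ball G S v j ⊆ S := by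
  induction j with
  | zero => rw [ball_zero]; exact Finset.empty_subset _
  | succ j ih =>
    cases j with
    | zero => rw [ball_one]; simpa
    | succ j =>
      rw [ball_succ]; exact Finset.union_subset ih (Finset.filter_subset _ _)

lemma mem_ball_of_adj {j : ℕ} {u w : V} (hu : u ∈ S) (hw : w ∈ ball G S v j) (h : G.Adj u w) :
    u ∈ ball G S v (j + 1) := by
  cases j with
  | zero => rw [ball_zero] at hw; simp at hw
  | succ j =>
    rw [ball_succ]
    exact Finset.mem_union_right _ (mem_nbhd.2 ⟨hu, w, hw, h⟩)

/-- The vertices at distance exactly `j` from `v` in `G[S]`. -/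
noncomputable def layer (j : ℕ) : Finset V := ball G S v (j + 1) \ ball G S v j

lemma layer_disj (i j : ℕ) (u : V) (hi : u ∈ layer G S v i) (hj : u ∈ layer G S v j) : i = j := by
  rw [layer, Finset.mem_sdiff] at hi hj
  by_contra h
  rcases Nat.lt_or_gt_of_ne h with h | h
  · exact hj.2 (ball_mono G S v h hi.1)
  · exact hi.2 (ball_mono G S v h hj.1)

lemma exists_parent (i : ℕ) (u : V) (hu : u ∈ layer G S v (i + 1)) :
    ∃ w ∈ layer G S v i, G.Adj u w := by
  rw [layer, Finset.mem_sdiff, ball_succ, Finset.mem_union, mem_nbhd] at hu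
  obtain ⟨hu1, hu2⟩ := hu
  obtain ⟨huS, w, hw, huw⟩ := hu1.resolve_left hu2
  refine ⟨w, Finset.mem_sdiff.2 ⟨hw, fun h => hu2 (mem_ball_of_adj G S v huS h huw)⟩, huw⟩

/-- The breadth-first search tree of `G[S]` rooted at `v`. -/
noncomputable def bfs (hv : v ∈ S) : Layering G S where
  L := layer G S v
  par := fun u => if h : ∃ w i, u ∈ layer G S v (i + 1) ∧ w ∈ layer G S v i ∧ G.Adj u w then
    h.choose else u
  root := v
  L_zero := by simp [layer, ball_zero, ball_one]
  sub := fun i => Finset.sdiff_subset.trans (ball_sub G S v hv _)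
  disj := layer_disj G S v
  par_mem := by
    intro i u hu
    have h : ∃ w i, u ∈ layer G S v (i + 1) ∧ w ∈ layer G S v i ∧ G.Adj u w := by
      obtain ⟨w, hw⟩ := exists_parent G S v i u hu
      exact ⟨w, i, hu, hw⟩
    rw [dif_pos h]
    obtain ⟨i', h1, h2, -⟩ := h.choose_spec
    have e := layer_disj G S v _ _ u h1 hu
    have e' : i' = i := by omega
    rwa [e'] at h2
  par_adj := by
    intro i u hu
    have h : ∃ w i, u ∈ layer G S v (i + 1) ∧ w ∈ layer G S v i ∧ G.Adj u w := by
      obtain ⟨w, hw⟩ := exists_parent G S v i u hu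
      exact ⟨w, i, hu, hw⟩
    rw [dif_pos h]
    exact h.choose_spec.choose_spec.2.2

/-- The neighbours of a vertex of layer `j` lie in the layers `j - 1`, `j` and `j + 1`. -/
lemma adj_layer {j : ℕ} {u w : V} (hu : u ∈ S) (hw : w ∈ layer G S v j) (h : G.Adj u w)
    (hwS : w ∈ S) :
    u ∈ layer G S v (j + 1) ∨ u ∈ layer G S v j ∨ (0 < j ∧ u ∈ layer G S v (j - 1)) := by
  have hw' := Finset.mem_sdiff.1 hw
  have h1 := mem_ball_of_adj G S v hu hw'.1 h
  by_cases c1 : u ∈ ball G S v (j + 1)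
  · right
    by_cases c2 : u ∈ ball G S v j
    · right
      cases j with
      | zero => rw [ball_zero] at c2; simp at c2
      | succ j =>
        refine ⟨by omega, Finset.mem_sdiff.2 ⟨c2, fun h3 => hw'.2 ?_⟩⟩
        exact mem_ball_of_adj G S v hwS h3 h.symm
    · left; exact Finset.mem_sdiff.2 ⟨c1, c2⟩
  · left; exact Finset.mem_sdiff.2 ⟨h1, c1⟩

end ball

lemma HasCycle.mono {V : Type*} {G : SimpleGraph V} {S S' : Finset V} {l : ℕ} (h : S' ⊆ S)
    (hc : HasCycle G S' l) : HasCycle G S l := by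
  obtain ⟨g, h1, h2, h3, h4⟩ := hc
  exact ⟨g, h1, fun m hm => h (h2 m hm), h3, h4⟩

/-- If `G[S]` has no `l`-cycle and no independent set larger than `t`, where `l ^ x t ≤ D ^ x`, then
some independent set contains a fraction of at least `1 / (l ^ x (D + 2))` of `S`. -/
lemma cycle_ramsey_aux {V : Type*} [LinearOrder V] (G : SimpleGraph V) (l x : ℕ) (t D : ℝ)
    (hx : 1 ≤ x) (hl : 2 * x + 1 ≤ l) (hD : 1 ≤ D) (hDt : (l : ℝ) ^ x * t ≤ D ^ x) :
    ∀ S : Finset V, ¬ HasCycle G S l → (∀ I ∈ indSets G S, (I.card : ℝ) ≤ t) →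
      ∃ I ∈ indSets G S, (S.card : ℝ) ≤ (l : ℝ) ^ x * (D + 2) * I.card := by
  intro S
  induction S using Finset.strongInduction with
  | H S ih =>
    intro hC ht
    rcases S.eq_empty_or_nonempty with rfl | ⟨v, hv⟩
    · exact ⟨∅, empty_mem_indSets _ _, by simp⟩
    set T := bfs G S v hv with hT
    have hTL : ∀ i, T.L i = layer G S v i := fun i => rfl
    have hl1 : (1 : ℝ) ≤ l := by exact_mod_cast (by omega : 1 ≤ l)
    have hex : ∃ j, ((T.L (j + 1)).card : ℝ) ≤ D * (T.L j).card ∧ j < x ∨ j = x := ⟨x, Or.inr rfl⟩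
    -- Layer `j` is the first one that is not followed by growth by a factor `D`.
    set j := Nat.find hex with hj
    have hgrow : ∀ i ≤ j, D ^ i ≤ ((T.L i).card : ℝ) ∧ (0 < i → D ^ i < ((T.L i).card : ℝ)) := by
      intro i
      induction i with
      | zero => intro _; simp [T.L_zero]
      | succ i ihi =>
        intro hi
        have h1 := Nat.find_min hex (m := i) (by omega)
        have hjx : j ≤ x := Nat.find_min' hex (Or.inr rfl)
        have h2 : D * (T.L i).card < (T.L (i + 1)).card := by
          by_contra hcon
          exact h1 (Or.inl ⟨not_lt.1 hcon, by omega⟩)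
        have h3 := (ihi (by omega)).1
        have h4 : D ^ (i + 1) < ((T.L (i + 1)).card : ℝ) := by
          rw [pow_succ]; nlinarith
        exact ⟨h4.le, fun _ => h4⟩
    have hjx : j ≤ x := Nat.find_min' hex (Or.inr rfl)
    obtain ⟨I, hIL, hI, hIc⟩ := T.exists_ind_layer (i := j) (l := l) (by omega) hC
    have hIS : I ∈ indSets G S := mem_indSets.2 ⟨hIL.trans (T.sub j), hI⟩
    have hIc' : ((T.L j).card : ℝ) ≤ (l : ℝ) ^ x * I.card := by
      calc ((T.L j).card : ℝ) ≤ (l : ℝ) ^ j * I.card := by exact_mod_cast hIc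
        _ ≤ _ := by gcongr
    -- For `j = x` the layer would be larger than `D ^ x`, contradicting the bound `t`.
    have hstep : ((T.L (j + 1)).card : ℝ) ≤ D * (T.L j).card := by
      rcases Nat.find_spec hex with h | h
      · exact h.1
      · exfalso
        rw [← hj] at h
        have h1 := ht I hIS
        have h3 : (l : ℝ) ^ x * I.card ≤ (l : ℝ) ^ x * t := by gcongr
        have h2 := (hgrow j le_rfl).2 (by omega)
        rw [h] at h2 hIc'
        linarith
    -- Removing `R` leaves no neighbours of `I`, at a cost of at most `(D + 2)` times layer `j`.
    set R := T.L (j + 1) ∪ T.L j ∪ (if 0 < j then T.L (j - 1) else ∅) with hR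
    have hRc : (R.card : ℝ) ≤ (D + 2) * (T.L j).card := by
      have h1 : R.card ≤ (T.L (j + 1)).card + (T.L j).card +
          (if 0 < j then T.L (j - 1) else ∅).card :=
        (Finset.card_union_le _ _).trans (by gcongr; exact Finset.card_union_le _ _)
      have h2 : (((if 0 < j then T.L (j - 1) else ∅).card : ℕ) : ℝ) ≤ (T.L j).card := by
        split_ifs with h0
        · have h1 := Nat.find_min hex (m := j - 1) (by omega)
          have h2 : D * (T.L (j - 1)).card < (T.L (j - 1 + 1)).card := by
            by_contra hcon
            exact h1 (Or.inl ⟨not_lt.1 hcon, by omega⟩)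
          have e : j - 1 + 1 = j := by omega
          rw [e] at h2
          have : (0 : ℝ) ≤ (T.L (j - 1)).card := by positivity
          nlinarith
        · simp
      have h3 : (R.card : ℝ) ≤ (T.L (j + 1)).card + (T.L j).card +
          (if 0 < j then T.L (j - 1) else ∅).card := by exact_mod_cast h1
      linarith
    have hLj : (T.L j).Nonempty := by
      rw [← Finset.card_pos]
      have h1 := (hgrow j le_rfl).1
      have h2 : (0 : ℝ) < D ^ j := by positivity
      exact_mod_cast h2.trans_le h1
    have hss : S \ R ⊂ S := by
      obtain ⟨u, hu⟩ := hLj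
      refine Finset.ssubset_iff_subset_ne.2 ⟨Finset.sdiff_subset, fun h => ?_⟩
      have h1 : u ∈ S := T.sub j hu
      rw [← h, Finset.mem_sdiff] at h1
      exact h1.2 (by simp [hR, hu])
    obtain ⟨I', hI', hc'⟩ := ih (S \ R) hss (fun h => hC (h.mono hss.1)) (fun I hI => by
      rw [mem_indSets] at hI
      exact ht I (mem_indSets.2 ⟨hI.1.trans hss.1, hI.2⟩))
    rw [mem_indSets] at hI'
    have hno : ∀ u ∈ I', ∀ w ∈ I, ¬ G.Adj u w := by
      intro u hu w hw h
      have hu' := Finset.mem_sdiff.1 (hI'.1 hu)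
      apply hu'.2
      have := adj_layer G S v hu'.1 (hIL hw) h (T.sub j (hIL hw))
      simp only [← hTL] at this
      rw [hR]
      rcases this with h | h | ⟨h0, h⟩
      · simp [h]
      · simp [h]
      · simp [h0, h]
    have hd : Disjoint I' I := by
      rw [Finset.disjoint_left]
      intro u hu hu'
      exact (Finset.mem_sdiff.1 (hI'.1 hu)).2 (by simp [hR, hIL hu'])
    refine ⟨I' ∪ I, ?_, ?_⟩
    · rw [mem_indSets]
      refine ⟨Finset.union_subset (hI'.1.trans hss.1) (mem_indSets.1 hIS).1, ?_⟩
      intro a ha b hb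
      rcases Finset.mem_union.1 ha with ha | ha <;> rcases Finset.mem_union.1 hb with hb | hb
      · exact hI'.2 a ha b hb
      · exact hno a ha b hb
      · exact fun h => hno b hb a ha h.symm
      · exact hI a ha b hb
    · have h1 : (S.card : ℝ) ≤ (S \ R).card + R.card := by
        exact_mod_cast Finset.card_le_card_sdiff_add_card
      rw [Finset.card_union_of_disjoint hd]
      push_cast
      have h2 : (D + 2) * (T.L j).card ≤ (D + 2) * ((l : ℝ) ^ x * I.card) := by gcongr
      linarith

/-- The bound `O(t^{k/(k-1)})` on the order of a graph without cycles of length `l ∈ {2k - 1, 2k}`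
and without independent sets larger than `t`. -/
theorem cycle_ramsey (k : ℕ) (hk : 2 ≤ k) {V : Type*} [LinearOrder V] (G : SimpleGraph V) (l : ℕ)
    (hl : 2 * k - 1 ≤ l) (hl2 : l ≤ 2 * k) (t : ℝ) (ht1 : 1 ≤ t) (S : Finset V)
    (hC : ¬ HasCycle G S l) (ht : ∀ I ∈ indSets G S, (I.card : ℝ) ≤ t) :
    (S.card : ℝ) ≤ (2 * k) ^ (k - 1) * (2 * k + 2) * t ^ ((k : ℝ) / (k - 1)) := by
  have hk1 : ((k - 1 : ℕ) : ℝ) = (k : ℝ) - 1 := by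
    rw [Nat.cast_sub (by omega)]; simp
  have hk2 : (2 : ℝ) ≤ k := by exact_mod_cast hk
  have hl' : (l : ℝ) ≤ 2 * k := by exact_mod_cast hl2
  have hl1 : (1 : ℝ) ≤ l := by exact_mod_cast (by omega : 1 ≤ l)
  set r := t ^ (1 / ((k : ℝ) - 1)) with hr
  have hr1 : 1 ≤ r := Real.one_le_rpow ht1 (by apply div_nonneg <;> linarith)
  have hrk : r ^ (k - 1) = t := by
    rw [hr, ← Real.rpow_natCast, ← Real.rpow_mul (by linarith), hk1, one_div_mul_cancel,
      Real.rpow_one]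
    linarith
  obtain ⟨I, hI, h⟩ := cycle_ramsey_aux G l (k - 1) t (l * r) (by omega) (by omega) (by nlinarith)
    (by rw [mul_pow, hrk]) S hC ht
  have e : t ^ ((k : ℝ) / (k - 1)) = r * t := by
    have : (k : ℝ) / (k - 1) = 1 / ((k : ℝ) - 1) + 1 := by
      field_simp [show (k : ℝ) - 1 ≠ 0 by linarith]; ring
    rw [this, Real.rpow_add (by linarith), Real.rpow_one]
  rw [e]
  calc (S.card : ℝ) ≤ (l : ℝ) ^ (k - 1) * (l * r + 2) * I.card := h
    _ ≤ (2 * k) ^ (k - 1) * (2 * k * r + 2 * r) * t := by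
      gcongr
      · linarith
      · exact ht I hI
    _ = _ := by ring

/-! ### Hermitian curves contain no O'Nan configuration -/

/-- A system of points and lines with the parameters, up to constants, of the affine Hermitian
unital of order `q` (at most `q³` points, between `q⁴ / 2` and `q⁴` lines, at least `q` points on
each line, two lines meeting at most once) and without O'Nan configurations. In `onan`, the point
`pij` lies on the lines `li` and `lj`; the listed non-incidences are enough to exclude degenerate
configurations. -/
structure IsUnital (q : ℕ) (P L : Type) [Fintype P] [Fintype L] (inc : P → L → Prop) : Prop where
  card_points : Fintype.card P ≤ q ^ 3
  card_lines_le : Fintype.card L ≤ q ^ 4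
  card_lines_ge : q ^ 4 ≤ 2 * Fintype.card L
  card_line : ∀ l, q ≤ (univ.filter (fun p => inc p l)).card
  inter : ∀ l l' p p', l ≠ l' → inc p l → inc p l' → inc p' l → inc p' l' → p = p'
  onan : ∀ l1 l2 l3 l4 p12 p13 p14 p23 p24 p34,
    inc p12 l1 → inc p12 l2 → inc p13 l1 → inc p13 l3 → inc p14 l1 → inc p14 l4 →
    inc p23 l2 → inc p23 l3 → inc p24 l2 → inc p24 l4 → inc p34 l3 → inc p34 l4 →
    ¬ inc p12 l3 → ¬ inc p12 l4 → ¬ inc p13 l4 → ¬ inc p23 l1 → ¬ inc p23 l4 → False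

section onan
variable {K : Type} [Field K]

/-- Write `h(B, C) = xB x̄C - yB - ȳC` for the Hermitian form on affine points, where the bar is `s`;
the points `B`, `C`, `D` are isotropic and lie on the line `y = a x + b`, and `D` lies on the line
`y = a4 x + b4`. If `f` and `g` are the values of `y - a4 x - b4` at `B` and `C`, then `D` is
proportional to `g B - f C` in homogeneous coordinates, and isotropy of `D` says that
`g f̄ h(B, C) + f ḡ h(C, B) = 0`. -/
lemma pair_rel (s : K →+* K) {a b a4 b4 xB yB xC yC xD yD : K}
    (hB : yB = a * xB + b) (hC : yC = a * xC + b) (hD : yD = a * xD + b)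
    (hD4 : yD = a4 * xD + b4)
    (cB : s yB + yB = xB * s xB) (cC : s yC + yC = xC * s xC) (cD : s yD + yD = xD * s xD) :
    (yC - a4 * xC - b4) * s (yB - a4 * xB - b4) * (xB * s xC - yB - s yC) +
      (yB - a4 * xB - b4) * s (yC - a4 * xC - b4) * (xC * s xB - yC - s yB) = 0 := by
  obtain ⟨f, hf⟩ : ∃ f, f = yB - a4 * xB - b4 := ⟨_, rfl⟩
  obtain ⟨g, hg⟩ : ∃ g, g = yC - a4 * xC - b4 := ⟨_, rfl⟩
  rw [← hf, ← hg]
  have h1 : xD * (g - f) = g * xB - f * xC := by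
    rw [hf, hg, hB, hC]
    have : (a - a4) * xD + (b - b4) = 0 := by linear_combination hD4 - hD
    linear_combination (xC - xB) * this
  have h2 : yD * (g - f) = g * yB - f * yC := by
    rw [hB, hC, hD]
    linear_combination a * h1
  have h1' : s xD * (s g - s f) = s g * s xB - s f * s xC := by
    have := congrArg s h1
    simpa using this
  have h2' : s yD * (s g - s f) = s g * s yB - s f * s yC := by
    have := congrArg s h2
    simpa using this
  have h3 : (g * xB - f * xC) * (s g * s xB - s f * s xC) - (g * yB - f * yC) * (s g - s f)
      - (s g * s yB - s f * s yC) * (g - f) = 0 := by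
    rw [← h1, ← h2, ← h1', ← h2']
    linear_combination (-(g - f) * (s g - s f)) * cD
  linear_combination (-1 : K) * h3 - g * s g * cB - f * s f * cC

/-- Four lines in an O'Nan configuration on the curve `ȳ + y = x x̄` are impossible. Let `A`, `B`, `C`
be the vertices `p23`, `p13`, `p12` of the triangle formed by the first three lines. Multiplying
the relations of `pair_rel` for its three sides gives
`h(B,C) h(C,A) h(A,B) + h(C,B) h(A,C) h(B,A) = 0`. As the three points are isotropic, this is the
Gram determinant of `A`, `B`, `C`, so the triangle is degenerate, a contradiction. -/
lemma onan_aux (s : K →+* K) {a1 b1 a2 b2 a3 b3 a4 b4 x12 y12 x13 y13 x14 y14 x23 y23 x24 y24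
      x34 y34 : K}
    (c12 : s y12 + y12 = x12 * s x12) (c13 : s y13 + y13 = x13 * s x13)
    (c14 : s y14 + y14 = x14 * s x14) (c23 : s y23 + y23 = x23 * s x23)
    (c24 : s y24 + y24 = x24 * s x24) (c34 : s y34 + y34 = x34 * s x34)
    (h121 : y12 = a1 * x12 + b1) (h122 : y12 = a2 * x12 + b2)
    (h131 : y13 = a1 * x13 + b1) (h133 : y13 = a3 * x13 + b3)
    (h141 : y14 = a1 * x14 + b1) (h144 : y14 = a4 * x14 + b4)
    (h232 : y23 = a2 * x23 + b2) (h233 : y23 = a3 * x23 + b3)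
    (h242 : y24 = a2 * x24 + b2) (h244 : y24 = a4 * x24 + b4)
    (h343 : y34 = a3 * x34 + b3) (h344 : y34 = a4 * x34 + b4)
    (n123 : y12 ≠ a3 * x12 + b3) (n124 : y12 ≠ a4 * x12 + b4) (n134 : y13 ≠ a4 * x13 + b4)
    (n231 : y23 ≠ a1 * x23 + b1) (n234 : y23 ≠ a4 * x23 + b4) : False := by
  have r1 := pair_rel s h131 h121 h141 h144 c13 c12 c14
  have r2 := pair_rel s h122 h232 h242 h244 c12 c23 c24
  have r3 := pair_rel s h233 h133 h343 h344 c23 c13 c34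
  obtain ⟨A, hA⟩ : ∃ f, f = y23 - a4 * x23 - b4 := ⟨_, rfl⟩
  obtain ⟨B, hB⟩ : ∃ f, f = y13 - a4 * x13 - b4 := ⟨_, rfl⟩
  obtain ⟨C, hC⟩ : ∃ f, f = y12 - a4 * x12 - b4 := ⟨_, rfl⟩
  rw [← hB, ← hC] at r1
  rw [← hA, ← hC] at r2
  rw [← hA, ← hB] at r3
  have A0 : A ≠ 0 := by rw [hA]; intro h; apply n234; linear_combination h
  have B0 : B ≠ 0 := by rw [hB]; intro h; apply n134; linear_combination h
  have C0 : C ≠ 0 := by rw [hC]; intro h; apply n124; linear_combination h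
  have sA0 : s A ≠ 0 := (map_ne_zero s).2 A0
  have sB0 : s B ≠ 0 := (map_ne_zero s).2 B0
  have sC0 : s C ≠ 0 := (map_ne_zero s).2 C0
  clear hA hB hC
  obtain ⟨hBC, e1⟩ : ∃ f, f = x13 * s x12 - y13 - s y12 := ⟨_, rfl⟩
  obtain ⟨hCB, e2⟩ : ∃ f, f = x12 * s x13 - y12 - s y13 := ⟨_, rfl⟩
  obtain ⟨hCA, e3⟩ : ∃ f, f = x12 * s x23 - y12 - s y23 := ⟨_, rfl⟩
  obtain ⟨hAC, e4⟩ : ∃ f, f = x23 * s x12 - y23 - s y12 := ⟨_, rfl⟩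
  obtain ⟨hAB, e5⟩ : ∃ f, f = x23 * s x13 - y23 - s y13 := ⟨_, rfl⟩
  obtain ⟨hBA, e6⟩ : ∃ f, f = x13 * s x23 - y13 - s y23 := ⟨_, rfl⟩
  rw [← e1, ← e2] at r1
  rw [← e3, ← e4] at r2
  rw [← e5, ← e6] at r3
  have hprod : (A * B * C * s A * s B * s C) * (hBC * hCA * hAB + hCB * hAC * hBA) = 0 := by
    linear_combination (A * s C * hCA) * (B * s A * hAB) * r1
      - (B * s C * hCB) * (B * s A * hAB) * r2 + (B * s C * hCB) * (C * s A * hAC) * r3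
  have hprod2 : hBC * hCA * hAB + hCB * hAC * hBA = 0 := by
    refine (mul_eq_zero.1 hprod).resolve_left ?_
    simp [A0, B0, C0, sA0, sB0, sC0]
  have hdet : (x23 * (y13 - y12) - y23 * (x13 - x12) + (x13 * y12 - y13 * x12)) *
      s (x23 * (y13 - y12) - y23 * (x13 - x12) + (x13 * y12 - y13 * x12)) = 0 := by
    simp only [map_add, map_sub, map_mul]
    rw [e1, e2, e3, e4, e5, e6] at hprod2
    linear_combination -hprod2
      + ((x13 * s x13 - y13 - s y13) * (x12 * s x12 - y12 - s y12)
        - (x13 * s x12 - y13 - s y12) * (x12 * s x13 - y12 - s y13)) * c23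
      - ((x23 * s x12 - y23 - s y12) * (x12 * s x23 - y12 - s y23)) * c13
      - ((x23 * s x13 - y23 - s y13) * (x13 * s x23 - y13 - s y23)) * c12
  have hdet2 : x23 * (y13 - y12) - y23 * (x13 - x12) + (x13 * y12 - y13 * x12) = 0 := by
    rcases mul_eq_zero.1 hdet with h | h
    · exact h
    · exact (map_eq_zero s).1 h
  have hfin : (y23 - a1 * x23 - b1) * (x12 - x13) = 0 := by
    rw [h121, h131] at hdet2
    linear_combination hdet2
  rcases mul_eq_zero.1 hfin with h | h
  · apply n231; linear_combination h
  · apply n123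
    have hx : x12 = x13 := by linear_combination h
    rw [h121, hx, ← h131, h133]

end onan

/-! ### The affine Hermitian unital -/

section unital

lemma card_pow_eq_le {K : Type} [Field K] [Fintype K] (n : ℕ) (hn : 0 < n) (c : K) :
    (univ.filter (fun u : K => u ^ n = c)).card ≤ n := by
  calc _ ≤ (Polynomial.nthRoots n c).toFinset.card := by
        apply card_le_card
        intro u hu
        simpa [Polynomial.mem_nthRoots hn] using hu
    _ ≤ _ := (Multiset.toFinset_card_le _).trans (Polynomial.card_nthRoots n c)

lemma card_trace_eq_le {K : Type} [Field K] [Fintype K] (q : ℕ) (hq : 2 ≤ q) (c : K) :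
    (univ.filter (fun u : K => u ^ q + u = c)).card ≤ q := by
  have hd : (Polynomial.X ^ q + (Polynomial.X - Polynomial.C c) : Polynomial K).natDegree = q := by
    rw [Polynomial.natDegree_add_eq_left_of_natDegree_lt]
    · simp
    · simp; omega
  have h0 : (Polynomial.X ^ q + (Polynomial.X - Polynomial.C c) : Polynomial K) ≠ 0 := by
    intro h; rw [h] at hd; simp at hd; omega
  calc _ ≤ (Polynomial.X ^ q + (Polynomial.X - Polynomial.C c) : Polynomial K).roots.toFinset.card := by
        apply card_le_card
        intro u hu
        simp only [mem_filter, mem_univ, true_and] at hu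
        rw [Multiset.mem_toFinset, Polynomial.mem_roots h0]
        simp only [Polynomial.IsRoot, Polynomial.eval_add, Polynomial.eval_sub,
          Polynomial.eval_pow, Polynomial.eval_X, Polynomial.eval_C]
        linear_combination hu
    _ ≤ _ := (Multiset.toFinset_card_le _).trans (Polynomial.card_roots' _)
    _ = q := hd

/-- In the field with `q²` elements every nonzero `c` fixed by Frobenius has at least `q` preimages
under the norm `u ↦ u ^ (q + 1)`: the `q² - 1` nonzero elements are mapped to the `(q - 1)`-st roots
of unity, of which there are at most `q - 1`, and no fibre has more than `q + 1` elements. -/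
lemma card_norm_fiber {K : Type} [Field K] [Fintype K] (q : ℕ) (hq : 2 ≤ q)
    (hK : Fintype.card K = q ^ 2) (c : K) (hc0 : c ≠ 0) (hc : c ^ q = c) :
    q ≤ (univ.filter (fun u : K => u ^ (q + 1) = c)).card := by
  obtain ⟨r, rfl⟩ : ∃ r, q = r + 1 := ⟨q - 1, by omega⟩
  have hr : 0 < r := by omega
  have key := card_eq_sum_card_fiberwise (f := fun u : K => u ^ (r + 1 + 1))
    (s := univ.filter (fun u : K => u ≠ 0)) (t := univ.filter (fun v : K => v ^ r = 1)) (by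
      intro u hu
      simp only [coe_filter, mem_univ, true_and, Set.mem_ofPred_eq] at hu ⊢
      rw [← pow_mul]
      have := FiniteField.pow_card_sub_one_eq_one u hu
      rw [hK] at this
      rw [← this]; congr 1
      zify [show 1 ≤ (r+1)^2 from Nat.one_le_pow _ _ (by omega)]; ring)
  have hcT : c ∈ univ.filter (fun v : K => v ^ r = 1) := by
    simp only [mem_filter, mem_univ, true_and]
    apply mul_right_cancel₀ hc0
    rw [← pow_succ, hc, one_mul]
  rw [← add_sum_erase _ _ hcT] at key
  have h1 : (univ.filter (fun u : K => u ≠ 0)).card = (r + 1) ^ 2 - 1 := by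
    rw [filter_ne', card_erase_of_mem (mem_univ _), card_univ, hK]
  have h2 : ∑ v ∈ (univ.filter (fun v : K => v ^ r = 1)).erase c,
      ((univ.filter (fun u : K => u ≠ 0)).filter (fun u => u ^ (r+1+1) = v)).card ≤
      (r - 1) * (r + 2) := by
    calc _ ≤ ∑ v ∈ (univ.filter (fun v : K => v ^ r = 1)).erase c, (r + 2) := by
          apply sum_le_sum
          intro v hv
          refine le_trans (card_le_card ?_) (card_pow_eq_le (r+1+1) (by omega) v)
          exact filter_subset_filter _ (subset_univ _)
      _ ≤ _ := by
          rw [sum_const, smul_eq_mul, card_erase_of_mem hcT]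
          exact Nat.mul_le_mul_right _ (Nat.sub_le_sub_right (card_pow_eq_le r hr 1) 1)
  have h3 : ((univ.filter (fun u : K => u ≠ 0)).filter (fun u => u ^ (r+1+1) = c)).card ≤
      (univ.filter (fun u : K => u ^ (r + 1 + 1) = c)).card :=
    card_le_card (filter_subset_filter _ (subset_univ _))
  rw [h1] at key
  obtain ⟨m, rfl⟩ : ∃ m, r = m + 1 := ⟨r - 1, by omega⟩
  have h4 : (m + 1 + 1) ^ 2 - 1 = m * (m + 3) + (m + 3) := by
    zify [show 1 ≤ (m+1+1)^2 from Nat.one_le_pow _ _ (by omega)]; ring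
  rw [h4] at key
  simp only [Nat.add_sub_cancel] at h2
  have h5 : m * (m + 1 + 2) = m * (m + 3) := by ring
  omega

lemma card_pairs_le {K : Type} [Fintype K] (R : K → K → Prop) (a b : ℕ)
    (ha : Fintype.card K ≤ a) (h : ∀ x, (univ.filter (fun y => R x y)).card ≤ b) :
    (univ.filter (fun z : K × K => R z.1 z.2)).card ≤ a * b := by
  have : (univ.filter (fun z : K × K => R z.1 z.2)).card
      = ∑ x : K, (univ.filter (fun y => R x y)).card := by
    simp only [card_filter]
    rw [Fintype.sum_prod_type]
  rw [this]
  calc _ ≤ ∑ x : K, b := sum_le_sum (fun x _ => h x)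
    _ = Fintype.card K * b := by simp
    _ ≤ _ := Nat.mul_le_mul_right _ ha

/-- The points are the affine points of the Hermitian curve `ȳ + y = x x̄` over the field with `q²`
elements, and the lines are the lines `y = a x + b` that are not tangent to the curve, which means
`b̄ + b + a ā ≠ 0`. Substituting `x = u + ā` turns the equation for the intersection into
`u ^ (q + 1) = b̄ + b + a ā`. -/
lemma exists_unital (q : ℕ) (hq : q.Prime) :
    ∃ (P L : Type) (_ : Fintype P) (_ : Fintype L) (inc : P → L → Prop), IsUnital q P L inc := by
  have : Fact q.Prime := ⟨hq⟩
  have hq2 := hq.two_le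
  let K := GaloisField q 2
  have : Fintype K := Fintype.ofFinite K
  have hK : Fintype.card K = q ^ 2 := by
    rw [← Nat.card_eq_fintype_card]; exact GaloisField.card q 2 (by norm_num)
  let s : K →+* K := frobenius K q
  have hs : ∀ x : K, s x = x ^ q := fun x => by simp [s, frobenius_def]
  have hss : ∀ x : K, s (s x) = x := by
    intro x
    rw [hs, hs, ← pow_mul, ← sq, ← hK, FiniteField.pow_card]
  let P := {z : K × K // s z.2 + z.2 = z.1 * s z.1}
  let L := {z : K × K // s z.2 + z.2 + z.1 * s z.1 ≠ 0}
  refine ⟨P, L, inferInstance, inferInstance, fun p l => p.1.2 = l.1.1 * p.1.1 + l.1.2, ?_⟩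
  have hfib : ∀ c : K, (univ.filter (fun y : K => s y + y = c)).card ≤ q := by
    intro c; simp only [hs]; exact card_trace_eq_le q hq2 c
  refine ⟨?_, ?_, ?_, ?_, ?_, ?_⟩
  · rw [Fintype.card_subtype]
    have := card_pairs_le (fun x y : K => s y + y = x * s x) (q^2) q hK.le (fun x => hfib _)
    calc _ ≤ q ^ 2 * q := this
      _ = q ^ 3 := by ring
  · calc Fintype.card L ≤ Fintype.card (K × K) := Fintype.card_subtype_le _
      _ = q ^ 4 := by rw [Fintype.card_prod, hK]; ring
  · have h1 := card_pairs_le (fun x y : K => s y + y + x * s x = 0) (q^2) q hK.le (fun x => by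
      refine le_trans (card_le_card ?_) (hfib (- (x * s x)))
      intro y hy
      simp only [mem_filter, mem_univ, true_and] at hy ⊢
      linear_combination hy)
    have h2 : (univ.filter (fun z : K × K => s z.2 + z.2 + z.1 * s z.1 = 0)).card +
        Fintype.card L = q ^ 4 := by
      rw [Fintype.card_subtype, card_filter_add_card_filter_not, card_univ, Fintype.card_prod, hK]
      ring
    have h3 : q ^ 4 = q * (q ^ 2 * q) := by ring
    have h4 : 2 * (q ^ 2 * q) ≤ q * (q ^ 2 * q) := Nat.mul_le_mul_right _ hq2
    omega
  · rintro ⟨⟨a, b⟩, hl⟩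
    simp only at hl ⊢
    have h1 := card_norm_fiber q hq2 hK (s b + b + a * s a) hl (by
      rw [← hs]; simp only [map_add, map_mul, hss]; ring)
    refine h1.trans ?_
    have hx : ∀ u ∈ univ.filter (fun u : K => u ^ (q + 1) = s b + b + a * s a),
        s (a * (u + s a) + b) + (a * (u + s a) + b) = (u + s a) * s (u + s a) := by
      intro u hu
      simp only [mem_filter, mem_univ, true_and] at hu
      rw [pow_succ, ← hs] at hu
      simp only [map_add, map_mul, hss]
      linear_combination -hu
    refine card_le_card_of_injOn
      (fun u => if h : s (a * (u + s a) + b) + (a * (u + s a) + b) = (u + s a) * s (u + s a) then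
        (⟨(u + s a, a * (u + s a) + b), h⟩ : P) else ⟨(0, 0), by simp⟩) ?_ ?_
    · intro u hu
      simp only [dif_pos (hx u hu)]
      simp
    · intro u hu v hv huv
      simp only [dif_pos (hx u hu), dif_pos (hx v hv)] at huv
      have := congrArg (fun z : P => z.1.1) huv
      simpa using this
  · rintro ⟨⟨a, b⟩, hl⟩ ⟨⟨a', b'⟩, hl'⟩ ⟨⟨x, y⟩, hp⟩ ⟨⟨x', y'⟩, hp'⟩ hne h1 h2 h3 h4
    simp only at h1 h2 h3 h4
    have hx : x = x' := by
      by_contra hx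
      apply hne
      have ha : a = a' := by
        have : (a - a') * (x - x') = 0 := by linear_combination h2 - h1 - h4 + h3
        rcases mul_eq_zero.1 this with h | h
        · exact sub_eq_zero.1 h
        · exact absurd (sub_eq_zero.1 h) hx
      have hb : b = b' := by rw [ha] at h1; linear_combination h2 - h1
      subst ha; subst hb; rfl
    subst hx
    have hy : y = y' := by rw [h1, h3]
    subst hy; rfl
  · rintro ⟨⟨a1, b1⟩, _⟩ ⟨⟨a2, b2⟩, _⟩ ⟨⟨a3, b3⟩, _⟩ ⟨⟨a4, b4⟩, _⟩ ⟨⟨x12, y12⟩, c12⟩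
      ⟨⟨x13, y13⟩, c13⟩ ⟨⟨x14, y14⟩, c14⟩ ⟨⟨x23, y23⟩, c23⟩ ⟨⟨x24, y24⟩, c24⟩ ⟨⟨x34, y34⟩, c34⟩
      i1 i2 i3 i4 i5 i6 i7 i8 i9 i10 i11 i12 n1 n2 n3 n4 n5
    exact onan_aux s c12 c13 c14 c23 c24 c34 i1 i2 i3 i4 i5 i6 i7 i8 i9 i10 i11 i12 n1 n2 n3 n4 n5

end unital

/-! ### Random bipartitions of the lines through each point -/

section bip
variable {P L : Type} [Fintype P] [Fintype L] {inc : P → L → Prop} {q : ℕ}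

/-- Two lines are adjacent when they meet in a point which colours them differently. -/
def bipGraph (inc : P → L → Prop) (χ : P → L → Bool) : SimpleGraph L where
  Adj l l' := ∃ p, inc p l ∧ inc p l' ∧ χ p l ≠ χ p l'
  symm := ⟨fun _ _ ⟨p, h1, h2, h3⟩ => ⟨p, h2, h1, h3.symm⟩⟩
  loopless := ⟨fun _ ⟨_, _, _, h⟩ => h rfl⟩

/-- If three pairwise adjacent lines passed through a common point, this point would have to give
them three different colours. So the lines of a `K₄` form an O'Nan configuration. -/
lemma bipGraph_K4_free (hU : IsUnital q P L inc) (χ : P → L → Bool) :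
    ¬ ContainsCopy (⊤ : SimpleGraph (Fin 4)) (bipGraph inc χ) := by
  rintro ⟨f, hf, hadj⟩
  have hconc : ∀ (a b c : L) (p p' p'' : P), a ≠ b → a ≠ c → b ≠ c →
      inc p a → inc p b → χ p a ≠ χ p b → inc p' a → inc p' c → χ p' a ≠ χ p' c →
      inc p'' b → inc p'' c → χ p'' b ≠ χ p'' c → ¬ inc p c := by
    intro a b c p p' p'' hab hac hbc h1 h2 h3 h4 h5 h6 h7 h8 h9 h
    have e1 : p' = p := hU.inter a c p' p hac h4 h5 h1 h
    have e2 : p'' = p := hU.inter b c p'' p hbc h7 h8 h2 h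
    subst e1; subst e2
    revert h3 h6 h9
    cases χ p'' a <;> cases χ p'' b <;> cases χ p'' c <;> simp
  have hne : ∀ i j : Fin 4, i ≠ j → f i ≠ f j := fun i j h h' => h (hf h')
  have had : ∀ i j : Fin 4, i ≠ j → (bipGraph inc χ).Adj (f i) (f j) := fun i j h => hadj h
  obtain ⟨p12, a1, a2, a3⟩ := had 0 1 (by decide)
  obtain ⟨p13, b1, b2, b3⟩ := had 0 2 (by decide)
  obtain ⟨p14, c1, c2, c3⟩ := had 0 3 (by decide)
  obtain ⟨p23, d1, d2, d3⟩ := had 1 2 (by decide)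
  obtain ⟨p24, e1, e2, e3⟩ := had 1 3 (by decide)
  obtain ⟨p34, g1, g2, g3⟩ := had 2 3 (by decide)
  have n01 := hne 0 1 (by decide)
  have n02 := hne 0 2 (by decide)
  have n03 := hne 0 3 (by decide)
  have n12 := hne 1 2 (by decide)
  have n13 := hne 1 3 (by decide)
  have n23 := hne 2 3 (by decide)
  refine hU.onan (f 0) (f 1) (f 2) (f 3) p12 p13 p14 p23 p24 p34 a1 a2 b1 b2 c1 c2 d1 d2 e1 e2
    g1 g2 ?_ ?_ ?_ ?_ ?_
  · exact hconc _ _ _ p12 p13 p23 n01 n02 n12 a1 a2 a3 b1 b2 b3 d1 d2 d3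
  · exact hconc _ _ _ p12 p14 p24 n01 n03 n13 a1 a2 a3 c1 c2 c3 e1 e2 e3
  · exact hconc _ _ _ p13 p14 p34 n02 n03 n23 b1 b2 b3 c1 c2 c3 g1 g2 g3
  · exact hconc _ _ _ p23 p12 p13 n12 n01.symm n02.symm d1 d2 d3 a2 a1 a3.symm b2 b1 b3.symm
  · exact hconc _ _ _ p23 p24 p34 n12 n13 n23 d1 d2 d3 e1 e2 e3 g1 g2 g3

/-- Size of the smaller colour class among the lines of `T`. -/
def minor (T : Finset L) (ψ : L → Bool) : ℕ :=
  min (T.filter (fun l => ψ l = true)).card (T.filter (fun l => ψ l = false)).card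

/-- Independence of the coordinates of a uniformly random function, as a product formula for sums
over all functions. -/
lemma sum_prod_fun {ι κ : Type} [Fintype ι] [Fintype κ] (f : ι → κ → ℝ) :
    ∑ x : ι → κ, ∏ i, f i (x i) = ∏ i, ∑ j, f i j := by
  rw [prod_univ_sum, Fintype.piFinset_univ]

lemma sum_half_pow_class (T : Finset L) (b : Bool) :
    ∑ ψ : L → Bool, ((1:ℝ)/2) ^ (T.filter (fun l => ψ l = b)).card =
      2 ^ Fintype.card L * ((3:ℝ)/4) ^ T.card := by
  have h1 : ∀ ψ : L → Bool, ((1:ℝ)/2) ^ (T.filter (fun l => ψ l = b)).card =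
      ∏ l : L, (fun l (c : Bool) => if l ∈ T ∧ c = b then (1:ℝ)/2 else 1) l (ψ l) := by
    intro ψ
    simp only
    rw [prod_ite, prod_const, prod_const_one, mul_one]
    congr 2
    ext l; simp
  rw [sum_congr rfl (fun x _ => h1 x),
    sum_prod_fun (fun (l : L) (c : Bool) => if l ∈ T ∧ c = b then (1:ℝ)/2 else 1)]
  have h2 : ∀ l : L, ∑ c : Bool, (if l ∈ T ∧ c = b then (1:ℝ)/2 else 1) =
      2 * (if l ∈ T then (3:ℝ)/4 else 1) := by
    intro l
    by_cases hl : l ∈ T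
    · cases b <;> simp [hl] <;> norm_num
    · simp [hl]
  simp_rw [h2]
  rw [prod_mul_distrib, prod_const, card_univ, prod_ite_mem, univ_inter, prod_const]

/-- For a uniformly random colouring `ψ`, the expectation of `2 ^ (-minor T ψ)` is at most
`2 (3/4) ^ |T|`. -/
lemma sum_half_pow_minor (T : Finset L) :
    ∑ ψ : L → Bool, ((1:ℝ)/2) ^ minor T ψ ≤ 2 ^ Fintype.card L * (2 * ((3:ℝ)/4) ^ T.card) := by
  calc _ ≤ ∑ ψ : L → Bool, (((1:ℝ)/2) ^ (T.filter (fun l => ψ l = true)).card +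
        ((1:ℝ)/2) ^ (T.filter (fun l => ψ l = false)).card) := by
        apply sum_le_sum
        intro ψ _
        unfold minor
        rcases min_choice (T.filter (fun l => ψ l = true)).card
          (T.filter (fun l => ψ l = false)).card with h | h <;> rw [h]
        · exact le_add_of_nonneg_right (by positivity)
        · exact le_add_of_nonneg_left (by positivity)
    _ = _ := by
        rw [sum_add_distrib, sum_half_pow_class, sum_half_pow_class]; ring

/-- At each point `p`, every line of `X` through `p` is adjacent to the lines of `X` through `p` of
the other colour, and neighbours gained at different points are different. -/
lemma sum_card_nb_ge (hU : IsUnital q P L inc) (χ : P → L → Bool) (X : Finset L) :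
    ∑ p : P, (X.filter (fun l => inc p l)).card * minor (X.filter (fun l => inc p l)) (χ p) ≤
      ∑ v ∈ X, (nb (bipGraph inc χ) X v).card := by
  let D : P → L → Finset L := fun p v => X.filter (fun u => inc p v ∧ inc p u ∧ χ p v ≠ χ p u)
  have h1 : ∀ v ∈ X, ∑ p : P, (D p v).card ≤ (nb (bipGraph inc χ) X v).card := by
    intro v _
    rw [← card_biUnion]
    · apply card_le_card
      intro u hu
      simp only [D, mem_biUnion, mem_univ, true_and, mem_filter] at hu
      obtain ⟨p, hu, h⟩ := hu
      rw [mem_nb]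
      exact ⟨hu, p, h⟩
    · intro p _ p' _ hpp
      rw [Function.onFun, disjoint_left]
      intro u hu hu'
      simp only [D, mem_filter] at hu hu'
      apply hpp
      refine hU.inter v u p p' ?_ hu.2.1 hu.2.2.1 hu'.2.1 hu'.2.2.1
      rintro rfl
      exact hu.2.2.2 rfl
  refine le_trans ?_ (sum_le_sum h1)
  rw [sum_comm]
  apply sum_le_sum
  intro p _
  rw [← smul_eq_mul, ← sum_const]
  refine le_trans (sum_le_sum (g := fun v => (D p v).card) ?_)
    (sum_le_sum_of_subset (filter_subset _ _))
  intro v hv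
  rw [mem_filter] at hv
  unfold minor
  cases h : χ p v
  · refine (min_le_left _ _).trans (card_le_card ?_)
    intro u hu
    simp only [D, mem_filter] at hu ⊢
    exact ⟨hu.1.1, hv.2, hu.1.2, by rw [h, hu.2]; simp⟩
  · refine (min_le_right _ _).trans (card_le_card ?_)
    intro u hu
    simp only [D, mem_filter] at hu ⊢
    exact ⟨hu.1.1, hv.2, hu.1.2, by rw [h, hu.2]; simp⟩

/-- The exponential moment, over all colourings, of the total size of the smaller colour classes at
the points of `R`; the colourings at different points are independent. -/
lemma sum_coloring_le (X : Finset L) (R : Finset P) :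
    ∑ χ : P → L → Bool, ((1:ℝ)/2) ^ (∑ p ∈ R, minor (X.filter (fun l => inc p l)) (χ p)) ≤
      (Fintype.card (P → L → Bool) : ℝ) *
        (2 ^ R.card * ((3:ℝ)/4) ^ (∑ p ∈ R, (X.filter (fun l => inc p l)).card)) := by
  have h1 : ∀ χ : P → L → Bool,
      ((1:ℝ)/2) ^ (∑ p ∈ R, minor (X.filter (fun l => inc p l)) (χ p)) =
      ∏ p : P, (fun p ψ => if p ∈ R then ((1:ℝ)/2) ^ minor (X.filter (fun l => inc p l)) ψ else 1)
        p (χ p) := by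
    intro χ
    simp only
    rw [prod_ite_mem, univ_inter, prod_pow_eq_pow_sum]
  rw [sum_congr rfl (fun x _ => h1 x), sum_prod_fun (fun (p : P) (ψ : L → Bool) =>
    if p ∈ R then ((1:ℝ)/2) ^ minor (X.filter (fun l => inc p l)) ψ else 1)]
  have h2 : ∀ p : P, ∑ ψ : L → Bool,
      (if p ∈ R then ((1:ℝ)/2) ^ minor (X.filter (fun l => inc p l)) ψ else 1) ≤
      2 ^ Fintype.card L *
        (if p ∈ R then 2 * ((3:ℝ)/4) ^ (X.filter (fun l => inc p l)).card else 1) := by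
    intro p
    split_ifs
    · exact sum_half_pow_minor _
    · simp
  refine (prod_le_prod (fun p _ => sum_nonneg fun ψ _ => by split_ifs <;> positivity)
    (fun p _ => h2 p)).trans (le_of_eq ?_)
  rw [prod_mul_distrib, prod_ite_mem, univ_inter, prod_mul_distrib, prod_const, prod_const,
    prod_pow_eq_pow_sum]
  simp

end bip

/-! ### Degrees in large sets of lines -/

section bip2
variable {P L : Type} [Fintype P] [Fintype L] {inc : P → L → Prop} {q : ℕ}

lemma sum_incidence_ge (hU : IsUnital q P L inc) (X : Finset L) :
    q * X.card ≤ ∑ p : P, (X.filter (fun l => inc p l)).card := by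
  have : ∑ p : P, (X.filter (fun l => inc p l)).card =
      ∑ l ∈ X, (univ.filter (fun p => inc p l)).card :=
    (sum_card_bipartiteAbove_eq_sum_card_bipartiteBelow (s := univ) (t := X) inc)
  rw [this, mul_comm, ← smul_eq_mul, ← sum_const]
  exact sum_le_sum fun l _ => hU.card_line l

/-- Points lying on at least half of the average number of lines of `X`. -/
noncomputable def richPts (inc : P → L → Prop) (q : ℕ) (X : Finset L) : Finset P :=
  univ.filter (fun p => (X.card : ℝ) ≤ 2 * q ^ 2 * (X.filter (fun l => inc p l)).card)

/-- At least half of the incidences with `X` occur at rich points. -/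
lemma sum_rich_ge (hU : IsUnital q P L inc) (hq : 1 ≤ q) (X : Finset L) :
    (q:ℝ) * X.card / 2 ≤ ∑ p ∈ richPts inc q X, ((X.filter (fun l => inc p l)).card : ℝ) := by
  have hq0 : (0:ℝ) < q := by exact_mod_cast hq
  have h1 : (q:ℝ) * X.card ≤ ∑ p : P, ((X.filter (fun l => inc p l)).card : ℝ) := by
    exact_mod_cast sum_incidence_ge hU X
  rw [← sum_filter_add_sum_filter_not univ
    (fun p => (X.card : ℝ) ≤ 2 * q ^ 2 * (X.filter (fun l => inc p l)).card)] at h1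
  have h2 : ∑ p ∈ univ.filter
      (fun p => ¬ (X.card : ℝ) ≤ 2 * q ^ 2 * (X.filter (fun l => inc p l)).card),
      ((X.filter (fun l => inc p l)).card : ℝ) ≤ q * X.card / 2 := by
    calc _ ≤ ∑ p ∈ univ.filter
            (fun p => ¬ (X.card : ℝ) ≤ 2 * q ^ 2 * (X.filter (fun l => inc p l)).card),
            ((X.card : ℝ) / (2 * q ^ 2)) := by
          apply sum_le_sum
          intro p hp
          rw [mem_filter, not_le] at hp
          rw [le_div_iff₀ (by positivity)]
          linarith [hp.2]
      _ ≤ ∑ p : P, ((X.card : ℝ) / (2 * q ^ 2)) :=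
          sum_le_sum_of_subset_of_nonneg (filter_subset _ _) (fun _ _ _ => by positivity)
      _ = Fintype.card P * ((X.card : ℝ) / (2 * q ^ 2)) := by simp
      _ ≤ (q:ℝ) ^ 3 * ((X.card : ℝ) / (2 * q ^ 2)) := by
          gcongr; exact_mod_cast hU.card_points
      _ = _ := by field_simp
  have h3 : richPts inc q X = univ.filter
      (fun p => (X.card : ℝ) ≤ 2 * q ^ 2 * (X.filter (fun l => inc p l)).card) := rfl
  rw [h3]
  linarith

/-- If all degrees in `X` are small, then the smaller colour classes at the rich points are small in
total. -/
lemma sum_minor_le (hU : IsUnital q P L inc) (hq : 1 ≤ q) (X : Finset L) (hX : X.Nonempty)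
    (χ : P → L → Bool)
    (hbad : ∀ v ∈ X, ((nb (bipGraph inc χ) X v).card : ℝ) < X.card / (32 * q)) :
    ((∑ p ∈ richPts inc q X, minor (X.filter (fun l => inc p l)) (χ p) : ℕ) : ℝ) ≤
      q * X.card / 16 := by
  have hq0 : (0:ℝ) < q := by exact_mod_cast hq
  have hx0 : (0:ℝ) < X.card := by exact_mod_cast hX.card_pos
  have h1 : (∑ p : P, ((X.filter (fun l => inc p l)).card : ℝ) *
      minor (X.filter (fun l => inc p l)) (χ p)) ≤
      ∑ v ∈ X, ((nb (bipGraph inc χ) X v).card : ℝ) := by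
    exact_mod_cast sum_card_nb_ge hU χ X
  have h2 : ∑ v ∈ X, ((nb (bipGraph inc χ) X v).card : ℝ) ≤ X.card * (X.card / (32 * q)) := by
    rw [← nsmul_eq_mul, ← sum_const]
    exact sum_le_sum fun v hv => (hbad v hv).le
  have h3 : (X.card : ℝ) / (2 * q ^ 2) *
      ((∑ p ∈ richPts inc q X, minor (X.filter (fun l => inc p l)) (χ p) : ℕ) : ℝ) ≤
      ∑ p : P, ((X.filter (fun l => inc p l)).card : ℝ) *
        minor (X.filter (fun l => inc p l)) (χ p) := by
    push_cast
    rw [mul_sum]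
    refine le_trans (sum_le_sum (g := fun p => ((X.filter (fun l => inc p l)).card : ℝ) *
      minor (X.filter (fun l => inc p l)) (χ p)) ?_)
      (sum_le_sum_of_subset_of_nonneg (subset_univ _) (fun _ _ _ => by positivity))
    intro p hp
    simp only [richPts, mem_filter, mem_univ, true_and] at hp
    apply mul_le_mul_of_nonneg_right _ (by positivity)
    rw [div_le_iff₀ (by positivity)]
    linarith
  have h4 := h3.trans (h1.trans h2)
  generalize ((∑ p ∈ richPts inc q X, minor (X.filter (fun l => inc p l)) (χ p) : ℕ) : ℝ) = M at *
  have h5 : (X.card : ℝ) / (2 * q ^ 2) * (q * X.card / 16) = X.card * (X.card / (32 * q)) := by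
    field_simp; norm_num
  rw [← h5] at h4
  exact le_of_mul_le_mul_left h4 (by positivity)

lemma three_quarters_pow_le (n : ℕ) : ((3:ℝ)/4) ^ n ≤ (2:ℝ) ^ (-(2/5) * n : ℝ) := by
  have h34 : (3:ℝ)/4 ≤ (2:ℝ) ^ (-(2/5) : ℝ) := by
    have e : (2:ℝ) ^ (-(2/5) : ℝ) = ((1:ℝ)/4) ^ ((1:ℝ)/5) := by
      rw [show (1:ℝ)/4 = 2 ^ (-2:ℝ) by rw [Real.rpow_neg (by norm_num)]; norm_num,
        ← Real.rpow_mul (by norm_num)]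
      norm_num
    rw [e]
    have : (3:ℝ)/4 = (((3:ℝ)/4) ^ (5:ℝ)) ^ ((1:ℝ)/5) := by
      rw [← Real.rpow_mul (by norm_num)]; norm_num
    rw [this]
    apply Real.rpow_le_rpow (by positivity) _ (by norm_num)
    norm_num
  rw [← Real.rpow_natCast, Real.rpow_mul (by norm_num)]
  exact Real.rpow_le_rpow (by norm_num) h34 n.cast_nonneg

/-- The proportion of colourings for which all degrees in `X` are below `|X| / 32q` is at most
`2 ^ (-3 q |X| / 40)`, by Markov's inequality for the exponential moment of `sum_coloring_le`. -/
lemma card_bad_le (hU : IsUnital q P L inc) (hq : 1 ≤ q) (X : Finset L)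
    (hX : 16 * q ^ 2 ≤ X.card) :
    ((univ.filter (fun χ : P → L → Bool =>
      ∀ v ∈ X, ((nb (bipGraph inc χ) X v).card : ℝ) < X.card / (32 * q))).card : ℝ) ≤
      (Fintype.card (P → L → Bool) : ℝ) * ((2:ℝ) ^ (-(3 * q / 40) : ℝ)) ^ X.card := by
  have hq0 : (0:ℝ) < q := by exact_mod_cast hq
  have hXne : X.Nonempty := by
    rw [← card_pos]; have : 0 < q ^ 2 := by positivity
    omega
  have hXr : 16 * (q:ℝ) ^ 2 ≤ X.card := by exact_mod_cast hX
  set B := univ.filter (fun χ : P → L → Bool =>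
      ∀ v ∈ X, ((nb (bipGraph inc χ) X v).card : ℝ) < X.card / (32 * q)) with hB
  have h1 := sum_coloring_le (inc := inc) X (richPts inc q X)
  have h2 : (B.card : ℝ) * (2:ℝ) ^ (-(q * X.card / 16) : ℝ) ≤ ∑ χ : P → L → Bool,
      ((1:ℝ)/2) ^ (∑ p ∈ richPts inc q X, minor (X.filter (fun l => inc p l)) (χ p)) := by
    rw [← nsmul_eq_mul, ← sum_const]
    refine le_trans (sum_le_sum ?_)
      (sum_le_sum_of_subset_of_nonneg (subset_univ B) (fun _ _ _ => by positivity))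
    intro χ hχ
    rw [hB, mem_filter] at hχ
    have := sum_minor_le hU hq X hXne χ hχ.2
    rw [one_div, inv_pow, ← Real.rpow_natCast, ← Real.rpow_neg (by norm_num)]
    exact Real.rpow_le_rpow_of_exponent_le (by norm_num) (by linarith)
  have h3 : (2:ℝ) ^ (richPts inc q X).card ≤ (2:ℝ) ^ (q * X.card / 16 : ℝ) := by
    rw [← Real.rpow_natCast]
    apply Real.rpow_le_rpow_of_exponent_le (by norm_num)
    have : ((richPts inc q X).card : ℝ) ≤ q ^ 3 := by
      exact_mod_cast (card_le_univ _).trans hU.card_points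
    nlinarith
  have h4 : ((3:ℝ)/4) ^ (∑ p ∈ richPts inc q X, (X.filter (fun l => inc p l)).card) ≤
      (2:ℝ) ^ (-(q * X.card / 5) : ℝ) := by
    refine (three_quarters_pow_le _).trans ?_
    apply Real.rpow_le_rpow_of_exponent_le (by norm_num)
    have := sum_rich_ge hU hq X
    push_cast
    linarith
  have h5 : (B.card : ℝ) * (2:ℝ) ^ (-(q * X.card / 16) : ℝ) ≤
      (Fintype.card (P → L → Bool) : ℝ) *
        ((2:ℝ) ^ (q * X.card / 16 : ℝ) * (2:ℝ) ^ (-(q * X.card / 5) : ℝ)) := by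
    refine h2.trans (h1.trans ?_)
    gcongr
  have h6 : ((2:ℝ) ^ (-(3 * q / 40) : ℝ)) ^ X.card * (2:ℝ) ^ (-(q * X.card / 16) : ℝ) =
      (2:ℝ) ^ (q * X.card / 16 : ℝ) * (2:ℝ) ^ (-(q * X.card / 5) : ℝ) := by
    rw [← Real.rpow_natCast, ← Real.rpow_mul (by norm_num), ← Real.rpow_add (by norm_num),
      ← Real.rpow_add (by norm_num)]
    congr 1; ring
  rw [← h6, ← mul_assoc] at h5
  exact le_of_mul_le_mul_right h5 (by positivity)

/-- Some colouring makes every set of at least `16 q²` lines contain a vertex of large degree, by a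
union bound over all sets. -/
theorem exists_coloring (hU : IsUnital q P L inc) (hq : 1 ≤ q)
    (hlarge : (q:ℝ) ^ 4 * (2:ℝ) ^ (-(3 * q / 40) : ℝ) ≤ 1 / 2) :
    ∃ χ : P → L → Bool, ∀ X : Finset L, 16 * q ^ 2 ≤ X.card →
      ∃ v ∈ X, (X.card : ℝ) / (32 * q) ≤ (nb (bipGraph inc χ) X v).card := by
  by_contra hcon
  push Not at hcon
  have hq0 : (0:ℝ) < q := by exact_mod_cast hq
  set ε : ℝ := (2:ℝ) ^ (-(3 * q / 40) : ℝ) with hε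
  have hε0 : 0 < ε := by positivity
  set N : ℝ := (Fintype.card (P → L → Bool) : ℝ) with hN
  have hN0 : 0 < N := by
    rw [hN]; exact_mod_cast Fintype.card_pos
  have h1 : N ≤ ∑ X ∈ (univ : Finset L).powerset.erase ∅, N * ε ^ X.card := by
    have hsub : (univ : Finset (P → L → Bool)) ⊆
        (((univ : Finset L).powerset.erase ∅).filter (fun X => 16 * q ^ 2 ≤ X.card)).biUnion
        (fun X => univ.filter (fun χ : P → L → Bool =>
          ∀ v ∈ X, ((nb (bipGraph inc χ) X v).card : ℝ) < X.card / (32 * q))) := by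
      intro χ _
      obtain ⟨X, hX, hb⟩ := hcon χ
      simp only [mem_biUnion, mem_filter, mem_erase, mem_powerset, mem_univ, true_and]
      refine ⟨X, ⟨⟨?_, subset_univ _⟩, hX⟩, hb⟩
      rintro rfl
      have : 0 < q ^ 2 := by positivity
      simp at hX
      omega
    calc N = ((univ : Finset (P → L → Bool)).card : ℝ) := by rw [hN, card_univ]
      _ ≤ ∑ X ∈ ((univ : Finset L).powerset.erase ∅).filter (fun X => 16 * q ^ 2 ≤ X.card),
          ((univ.filter (fun χ : P → L → Bool =>
          ∀ v ∈ X, ((nb (bipGraph inc χ) X v).card : ℝ) < X.card / (32 * q))).card : ℝ) := by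
          exact_mod_cast (card_le_card hsub).trans card_biUnion_le
      _ ≤ ∑ X ∈ ((univ : Finset L).powerset.erase ∅).filter (fun X => 16 * q ^ 2 ≤ X.card),
          N * ε ^ X.card := by
          apply sum_le_sum
          intro X hX
          exact card_bad_le hU hq X (mem_filter.1 hX).2
      _ ≤ _ := sum_le_sum_of_subset_of_nonneg (filter_subset _ _) (fun _ _ _ => by positivity)
  rw [← mul_sum] at h1
  -- The failure probabilities sum to `(1 + ε) ^ |L| - 1`, which is less than `1`.
  have h2 : 1 ≤ ∑ X ∈ (univ : Finset L).powerset.erase ∅, ε ^ X.card := by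
    by_contra h; push Not at h
    nlinarith
  have h3 := add_sum_erase (univ : Finset L).powerset (fun X => ε ^ X.card) (empty_mem_powerset _)
  rw [sum_powerset_pow] at h3
  simp only [card_empty, pow_zero] at h3
  have h4 : (1 + ε) ^ (univ : Finset L).card ≤ Real.exp (1/2) := by
    calc (1 + ε) ^ (univ : Finset L).card ≤ (Real.exp ε) ^ (univ : Finset L).card := by
          gcongr; linarith [Real.add_one_le_exp ε]
      _ = Real.exp ((univ : Finset L).card * ε) := by rw [Real.exp_nat_mul]
      _ ≤ _ := by
          apply Real.exp_le_exp.2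
          refine le_trans ?_ hlarge
          gcongr
          rw [card_univ]; exact_mod_cast hU.card_lines_le
  have h5 : Real.exp (1/2) < 2 := by
    have h := Real.exp_one_lt_d9
    have h6 : Real.exp (1/2) * Real.exp (1/2) = Real.exp 1 := by rw [← Real.exp_add]; norm_num
    nlinarith [Real.exp_pos (1/2)]
  linarith

end bip2

/-! ### Counting independent sets and random partitions -/

section count
variable {V : Type}

/-- Split the independent sets according to whether they contain `v`. -/
lemma hcZ_recursion (G : SimpleGraph V) {l : ℝ} (hl : 0 ≤ l) (S : Finset V) {v : V} (hv : v ∈ S) :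
    hcZ G l S ≤ hcZ G l (S.erase v) + l * hcZ G l (S \ insert v (nb G S v)) := by
  rw [← sum_indSets_mem G l S hv]
  rw [hcZ, ← sum_filter_add_sum_filter_not (indSets G S) (fun I => v ∈ I), add_comm]
  gcongr
  refine sum_le_sum_of_subset_of_nonneg ?_ (fun _ _ _ => by positivity)
  intro I hI
  rw [mem_filter, mem_indSets] at hI
  rw [mem_indSets]
  exact ⟨fun u hu => mem_erase.2 ⟨fun h => hI.2 (h ▸ hu), hI.1.1 hu⟩, hI.1.2⟩

/-- If every set of at least `M` vertices contains a vertex adjacent to a proportion `b` of the set,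
then the partition function is at most `(|S| + 1) ^ A (1 + l) ^ M`, where `A` is such that
`(1 - b) ^ A |S| ≤ 1`. Branching on a vertex of large degree, each choice of that vertex multiplies
the set by at most `1 - b`; the polynomial factor pays for both branches. -/
lemma hcZ_le_container (G : SimpleGraph V) (M A : ℕ) (b l N : ℝ) (hM : 1 ≤ M) (hA : 1 ≤ A)
    (hb1 : b ≤ 1) (hl : 0 ≤ l) (hl1 : l ≤ 1) (hAN : (1 - b) ^ A * N ≤ 1)
    (hdeg : ∀ X : Finset V, M ≤ X.card → ∃ v ∈ X, b * X.card ≤ (nb G X v).card)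
    (S : Finset V) (hS : (S.card : ℝ) ≤ N) :
    hcZ G l S ≤ ((S.card : ℝ) + 1) ^ A * (1 + l) ^ M := by
  induction' hn : S.card using Nat.strong_induction_on with n ih generalizing S
  have hB1 : 1 ≤ (1 + l) ^ M := one_le_pow₀ (by linarith)
  rcases lt_or_ge n M with hlt | hge
  · calc hcZ G l S ≤ (1 + l) ^ S.card := hcZ_le_pow G hl S
      _ ≤ (1 + l) ^ M := pow_le_pow_right₀ (by linarith) (by omega)
      _ ≤ _ := le_mul_of_one_le_left (by positivity) (one_le_pow₀ (by
        have : (0:ℝ) ≤ n := n.cast_nonneg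
        linarith))
  · obtain ⟨v, hv, hvd⟩ := hdeg S (by omega)
    have hn0 : (0:ℝ) < n := by exact_mod_cast (by omega : 0 < n)
    have hc1 : (S.erase v).card = n - 1 := by rw [card_erase_of_mem hv, hn]
    have h1 := ih (n - 1) (by omega) (S.erase v) (le_trans (by
      exact_mod_cast card_le_card (erase_subset v S)) hS) hc1
    rw [Nat.cast_sub (by omega), Nat.cast_one, sub_add_cancel] at h1
    have hvn : v ∉ nb G S v := by rw [mem_nb]; exact fun h => G.loopless.irrefl v h.2
    have hsub : insert v (nb G S v) ⊆ S := by
      intro u hu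
      rcases mem_insert.1 hu with rfl | hu
      · exact hv
      · exact (mem_nb.1 hu).1
    have hc2 : (S \ insert v (nb G S v)).card + ((nb G S v).card + 1) = n := by
      rw [← card_insert_of_notMem hvn, card_sdiff_add_card_eq_card hsub, hn]
    have h2 := ih (S \ insert v (nb G S v)).card (by omega) (S \ insert v (nb G S v)) (le_trans (by
      exact_mod_cast card_le_card sdiff_subset) hS) rfl
    have hc3 : ((S \ insert v (nb G S v)).card : ℝ) + 1 ≤ (1 - b) * n := by
      have : ((S \ insert v (nb G S v)).card : ℝ) + ((nb G S v).card + 1) = n := by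
        exact_mod_cast hc2
      rw [hn] at hvd
      linarith
    have h3 : hcZ G l (S \ insert v (nb G S v)) ≤ ((1 - b) * n) ^ A * (1 + l) ^ M :=
      h2.trans (by gcongr)
    have h4 : (1 - b) ^ A * n ≤ 1 := by
      refine le_trans ?_ hAN
      have : 0 ≤ 1 - b := by linarith
      rw [hn] at hS
      gcongr
    have h5 : (n:ℝ) ^ A + l * ((1 - b) * n) ^ A ≤ ((n:ℝ) + 1) ^ A := by
      have e1 : ((n:ℝ) + 1) ^ A = (1 + 1 / n) ^ A * n ^ A := by
        rw [← mul_pow]; congr 1; field_simp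
      have e2 : 1 + (A:ℝ) * (1 / n) ≤ (1 + 1 / (n:ℝ)) ^ A :=
        one_add_mul_le_pow (by have : 0 < 1 / (n:ℝ) := by positivity
                               linarith) A
      have e3 : l * (1 - b) ^ A ≤ 1 / n := by
        rw [le_div_iff₀ hn0]
        have : 0 ≤ (1 - b) ^ A * n := mul_nonneg (pow_nonneg (by linarith) _) hn0.le
        nlinarith
      have e4 : 1 / (n:ℝ) ≤ A * (1 / n) :=
        le_mul_of_one_le_left (by positivity) (by exact_mod_cast hA)
      rw [e1, mul_pow]
      have : 0 < (n:ℝ) ^ A := by positivity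
      nlinarith
    calc hcZ G l S ≤ hcZ G l (S.erase v) + l * hcZ G l (S \ insert v (nb G S v)) :=
          hcZ_recursion G hl S hv
      _ ≤ (n:ℝ) ^ A * (1 + l) ^ M + l * (((1 - b) * n) ^ A * (1 + l) ^ M) := by gcongr
      _ = ((n:ℝ) ^ A + l * ((1 - b) * n) ^ A) * (1 + l) ^ M := by ring
      _ ≤ _ := by gcongr

variable [Fintype V]

/-- Given fewer than `r ^ (t - 1)` sets of size `t`, some partition of the vertices into `r` parts
has none of them inside a part; the set `U` is the largest part. A random partition puts a fixed
`t`-set inside a part with probability `r ^ (1 - t)`. -/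
lemma exists_part (T : Finset (Finset V)) (t r : ℕ) (hr : 1 ≤ r) (hT : ∀ I ∈ T, I.card = t)
    (hlt : (T.card : ℝ) * r < (r:ℝ) ^ t) :
    ∃ U : Finset V, Fintype.card V ≤ r * U.card ∧ ∀ I ∈ T, ¬ I ⊆ U := by
  have hr0 : (0:ℝ) < r := by exact_mod_cast hr
  have : Nonempty (Fin r) := ⟨⟨0, hr⟩⟩
  obtain ⟨f, hf⟩ : ∃ f : V → Fin r, ∀ I ∈ T, ∀ c, ¬ ∀ v ∈ I, f v = c := by
    by_contra hcon
    push Not at hcon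
    have h1 : (Fintype.card (V → Fin r) : ℝ) ≤ ∑ f : V → Fin r, ∑ I ∈ T, ∑ c : Fin r,
        ∏ v : V, (if v ∈ I → f v = c then (1:ℝ) else 0) := by
      have : (Fintype.card (V → Fin r) : ℝ) = ∑ f : V → Fin r, (1:ℝ) := by simp
      rw [this]
      apply sum_le_sum
      intro f _
      obtain ⟨I, hI, c, hc⟩ := hcon f
      have h0 : ∀ (I : Finset V) (c : Fin r),
          0 ≤ ∏ v : V, (if v ∈ I → f v = c then (1:ℝ) else 0) :=
        fun I c => prod_nonneg fun v _ => by split_ifs <;> norm_num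
      calc (1:ℝ) = ∏ v : V, (if v ∈ I → f v = c then (1:ℝ) else 0) := by
            rw [prod_congr rfl (fun v _ => if_pos (hc v))]; simp
        _ ≤ ∑ c : Fin r, ∏ v : V, (if v ∈ I → f v = c then (1:ℝ) else 0) :=
            single_le_sum (f := fun c => ∏ v : V, (if v ∈ I → f v = c then (1:ℝ) else 0))
              (fun c _ => h0 I c) (mem_univ c)
        _ ≤ _ := single_le_sum
              (f := fun I => ∑ c : Fin r, ∏ v : V, (if v ∈ I → f v = c then (1:ℝ) else 0))
              (fun I _ => sum_nonneg fun c _ => h0 I c) hI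
    rw [sum_comm] at h1
    have h2 : ∀ I ∈ T, ∑ f : V → Fin r, ∑ c : Fin r,
        ∏ v : V, (if v ∈ I → f v = c then (1:ℝ) else 0) =
        r * ((r:ℝ) ^ Fintype.card V * (1 / (r:ℝ)) ^ t) := by
      intro I hI
      rw [sum_comm]
      have h3 : ∀ c : Fin r, ∑ f : V → Fin r,
          ∏ v : V, (if v ∈ I → f v = c then (1:ℝ) else 0) =
          (r:ℝ) ^ Fintype.card V * (1 / (r:ℝ)) ^ t := by
        intro c
        rw [sum_prod_fun (fun (v : V) (d : Fin r) => if v ∈ I → d = c then (1:ℝ) else 0)]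
        have h4 : ∀ v : V, ∑ d : Fin r, (if v ∈ I → d = c then (1:ℝ) else 0) =
            r * (if v ∈ I then 1 / (r:ℝ) else 1) := by
          intro v
          by_cases hv : v ∈ I
          · simp [hv, hr0.ne']
          · simp [hv]
        simp_rw [h4]
        rw [prod_mul_distrib, prod_const, card_univ, prod_ite_mem, univ_inter, prod_const, hT I hI]
      rw [sum_congr rfl (fun c _ => h3 c)]
      simp
    rw [sum_congr rfl h2, sum_const, nsmul_eq_mul] at h1
    have h5 : (Fintype.card (V → Fin r) : ℝ) = (r:ℝ) ^ Fintype.card V := by simp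
    rw [h5] at h1
    have h6 : (T.card : ℝ) * (r * ((r:ℝ) ^ Fintype.card V * (1 / (r:ℝ)) ^ t)) =
        ((T.card : ℝ) * r / (r:ℝ) ^ t) * (r:ℝ) ^ Fintype.card V := by
      rw [one_div, inv_pow]; field_simp
    rw [h6] at h1
    have h7 : (T.card : ℝ) * r / (r:ℝ) ^ t < 1 := by
      rw [div_lt_one (by positivity)]; exact hlt
    have h8 : 0 < (r:ℝ) ^ Fintype.card V := by positivity
    nlinarith
  obtain ⟨c, hc⟩ : ∃ c : Fin r, Fintype.card V ≤ r * (univ.filter (fun v => f v = c)).card := by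
    by_contra hcon
    push Not at hcon
    have h1 : (univ : Finset V).card = ∑ c : Fin r, (univ.filter (fun v => f v = c)).card :=
      card_eq_sum_card_fiberwise (fun v _ => mem_univ (f v))
    have h2 : ∑ c : Fin r, r * (univ.filter (fun v => f v = c)).card <
        ∑ c : Fin r, Fintype.card V := sum_lt_sum_of_nonempty univ_nonempty (fun c _ => hcon c)
    rw [← mul_sum, ← h1, card_univ] at h2
    simp at h2
  refine ⟨_, hc, fun I hI hsub => hf I hI c fun v hv => ?_⟩
  exact (mem_filter.1 (hsub hv)).2

lemma card_ind_le (G : SimpleGraph V) (t : ℕ) (l : ℝ) (hl : 0 ≤ l) :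
    (((indSets G univ).filter (fun I => I.card = t)).card : ℝ) * l ^ t ≤ hcZ G l univ := by
  rw [← nsmul_eq_mul, ← sum_const, hcZ]
  refine le_trans (le_of_eq (sum_congr rfl fun I hI => ?_))
    (sum_le_sum_of_subset_of_nonneg (filter_subset (fun I : Finset V => I.card = t) _)
      (fun _ _ _ => by positivity))
  rw [(mem_filter.1 hI).2]

end count

/-! ### The `K₄`-free graph attached to a prime -/

set_option maxHeartbeats 1000000 in
/-- The graph of a random colouring of the unital, restricted to a part `U` of a random partition
of its vertices, where `U` has order `q³ (log q)²`, and no independent set of `U` has size greater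
than `650 q (log q)²`. -/
lemma exists_K4_free_of_prime (q : ℕ) (hq : q.Prime) (h1 : 1 ≤ Real.log q) (h2 : 700 * Real.log q ^ 2 ≤ q) :
    ∃ (V : Type) (_ : Fintype V) (G : SimpleGraph V) (U : Finset V),
      ¬ ContainsCopy (⊤ : SimpleGraph (Fin 4)) G ∧
      (q:ℝ) ^ 3 * Real.log q ^ 2 / 2 ≤ U.card ∧
      ∀ I ∈ indSets G U, (I.card : ℝ) ≤ 650 * q * Real.log q ^ 2 := by
  obtain ⟨P, L, hP, hL, inc, hU⟩ := exists_unital q hq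
  set ℓ := Real.log q with hℓ
  have hq1 : 1 ≤ q := hq.one_lt.le
  have hq0 : (0:ℝ) < q := by exact_mod_cast hq.pos
  have hqr1 : (1:ℝ) ≤ q := by exact_mod_cast hq1
  have hqe : (q:ℝ) = Real.exp ℓ := (Real.exp_log hq0).symm
  clear_value ℓ
  have hℓ2 : 1 ≤ ℓ ^ 2 := by nlinarith
  have hlarge : (q:ℝ) ^ 4 * (2:ℝ) ^ (-(3 * q / 40) : ℝ) ≤ 1 / 2 := by
    have e1 : (q:ℝ) ^ 4 = Real.exp (4 * ℓ) := by
      rw [hqe, ← Real.exp_nat_mul]; norm_num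
    have e2 : (1:ℝ)/2 = Real.exp (-Real.log 2) := by
      rw [Real.exp_neg, Real.exp_log (by norm_num)]; norm_num
    rw [Real.rpow_def_of_pos (by norm_num), e1, e2, ← Real.exp_add]
    apply Real.exp_le_exp.2
    have g1 := Real.log_two_gt_d9
    have g2 := Real.log_two_lt_d9
    have g3 : 700 * ℓ ≤ q := by nlinarith
    nlinarith
  obtain ⟨χ, hχ⟩ := exists_coloring hU hq1 hlarge
  set G := bipGraph inc χ with hG
  -- `A` is the number of greedy steps, as `(1 - 1 / 32q) ^ (128 q log q) ≤ q ^ (-4)`; the fugacity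
  -- `l = t / M` makes both factors of the bound on the partition function at most `exp t`.
  obtain ⟨A, hA⟩ : ∃ m, m = ⌈128 * q * ℓ⌉₊ := ⟨_, rfl⟩
  obtain ⟨t, ht⟩ : ∃ m, m = ⌈650 * q * ℓ ^ 2⌉₊ := ⟨_, rfl⟩
  obtain ⟨M, hM⟩ : ∃ m, m = 16 * q ^ 2 := ⟨_, rfl⟩
  have hqℓ : 1 ≤ q * ℓ := one_le_mul_of_one_le_of_one_le hqr1 h1
  have hAl : 128 * q * ℓ ≤ (A:ℝ) := hA ▸ Nat.le_ceil _
  have hAu : (A:ℝ) ≤ 129 * q * ℓ := by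
    have := (Nat.ceil_lt_add_one (show 0 ≤ 128 * q * ℓ by positivity)).le
    rw [← hA] at this
    linarith
  have htl : 650 * q * ℓ ^ 2 ≤ (t:ℝ) := ht ▸ Nat.le_ceil _
  have htu : (t:ℝ) ≤ 651 * q * ℓ ^ 2 := by
    have := (Nat.ceil_lt_add_one (show 0 ≤ 650 * q * ℓ ^ 2 by positivity)).le
    rw [← ht] at this
    have : 1 ≤ q * ℓ ^ 2 := one_le_mul_of_one_le_of_one_le hqr1 hℓ2
    linarith
  have hMr : (M:ℝ) = 16 * q ^ 2 := by rw [hM]; push_cast; ring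
  have hM0 : (0:ℝ) < M := by rw [hMr]; positivity
  have htM : (t:ℝ) ≤ M := by rw [hMr]; nlinarith
  have htq : 650 * (q:ℝ) ≤ t := by nlinarith
  have ht0 : (0:ℝ) < t := by linarith
  have hA1 : 1 ≤ A := by
    have : (1:ℝ) ≤ A := by linarith
    exact_mod_cast this
  obtain ⟨l, hl⟩ : ∃ m : ℝ, m = t / M := ⟨_, rfl⟩
  have hl0 : 0 ≤ l := by rw [hl]; positivity
  have hl1 : l ≤ 1 := by rw [hl]; exact (div_le_one hM0).2 htM
  have hlM : l * M = t := by rw [hl]; field_simp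
  obtain ⟨b, hb⟩ : ∃ m : ℝ, m = 1 / (32 * q) := ⟨_, rfl⟩
  have hb1 : b ≤ 1 := by
    rw [hb, div_le_one (by positivity)]; linarith
  have hAN : (1 - b) ^ A * (q:ℝ) ^ 4 ≤ 1 := by
    have e1 : (q:ℝ) ^ 4 = Real.exp (4 * ℓ) := by
      rw [hqe, ← Real.exp_nat_mul]; norm_num
    have e2 : (1 - b) ^ A ≤ Real.exp (- (4 * ℓ)) := by
      calc (1 - b) ^ A ≤ (Real.exp (-b)) ^ A :=
            pow_le_pow_left₀ (by linarith) (Real.one_sub_le_exp_neg b) _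
        _ = Real.exp (A * (-b)) := by rw [Real.exp_nat_mul]
        _ ≤ _ := by
            apply Real.exp_le_exp.2
            have : 4 * ℓ = (128 * q * ℓ) * b := by rw [hb]; field_simp; norm_num
            have hb0 : 0 < b := by rw [hb]; positivity
            rw [this]
            nlinarith
    calc _ ≤ Real.exp (- (4 * ℓ)) * Real.exp (4 * ℓ) := by rw [e1]; gcongr
      _ = 1 := by rw [← Real.exp_add]; simp
  have hdeg : ∀ X : Finset L, M ≤ X.card → ∃ v ∈ X, b * X.card ≤ (nb G X v).card := by
    intro X hX
    rw [hM] at hX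
    obtain ⟨v, hv, h⟩ := hχ X hX
    refine ⟨v, hv, le_trans (le_of_eq ?_) h⟩
    rw [hb]; ring
  have hLq : ((univ : Finset L).card : ℝ) ≤ (q:ℝ) ^ 4 := by
    rw [card_univ]; exact_mod_cast hU.card_lines_le
  have hM1 : 1 ≤ M := by
    have : 0 < q ^ 2 := by positivity
    omega
  have hZ := hcZ_le_container G M A b l ((q:ℝ) ^ 4) hM1 hA1 hb1 hl0 hl1 hAN hdeg univ hLq
  have hZ2 : hcZ G l univ ≤ Real.exp (2 * t) := by
    refine hZ.trans ?_
    have e1 : (((univ : Finset L).card : ℝ) + 1) ^ A ≤ Real.exp t := by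
      have q700 : (700:ℝ) ≤ q := by nlinarith
      have : ((univ : Finset L).card : ℝ) + 1 ≤ Real.exp (5 * ℓ) := by
        have e5 : Real.exp (5 * ℓ) = (q:ℝ) ^ 5 := by
          rw [hqe, ← Real.exp_nat_mul]; norm_num
        rw [e5]
        have : (1:ℝ) ≤ (q:ℝ) ^ 4 := one_le_pow₀ hqr1
        nlinarith
      calc _ ≤ (Real.exp (5 * ℓ)) ^ A := pow_le_pow_left₀ (add_nonneg (Nat.cast_nonneg _) zero_le_one) this _
        _ = Real.exp (A * (5 * ℓ)) := by rw [Real.exp_nat_mul]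
        _ ≤ _ := by
            apply Real.exp_le_exp.2
            nlinarith [mul_le_mul_of_nonneg_right hAu (show 0 ≤ 5 * ℓ by linarith)]
    have e2 : (1 + l) ^ M ≤ Real.exp t := by
      calc (1 + l) ^ M ≤ (Real.exp l) ^ M := by
            gcongr; linarith [Real.add_one_le_exp l]
        _ = Real.exp (M * l) := by rw [Real.exp_nat_mul]
        _ = _ := by rw [mul_comm, hlM]
    calc _ ≤ Real.exp t * Real.exp t := by gcongr
      _ = _ := by rw [← Real.exp_add]; ring_nf
  set T := (indSets G univ).filter (fun I : Finset L => I.card = t) with hT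
  have hTl : (T.card : ℝ) * l ^ t ≤ Real.exp (2 * t) := (card_ind_le G t l hl0).trans hZ2
  have he3 : Real.exp 3 ≤ (101 / 5 : ℝ) := by
    have : Real.exp 3 = Real.exp 1 ^ 3 := by rw [← Real.exp_nat_mul]; norm_num
    rw [this]
    have h := Real.exp_one_lt_d9.le
    calc Real.exp 1 ^ 3 ≤ 2.7182818286 ^ 3 := by gcongr
      _ ≤ _ := by norm_num
  have he31 : 1 ≤ Real.exp 3 := Real.one_le_exp (by norm_num)
  have heE : Real.exp (3 * t) = (Real.exp 3) ^ t := by rw [← Real.exp_nat_mul]; ring_nf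
  generalize Real.exp 3 = E at he3 he31 heE
  -- There are at most `(exp 2 / l) ^ t` independent `t`-sets, so `r = exp 3 / l` parts suffice. The
  -- constant `650` is chosen so that `r ≤ q / (log q) ^ 2`.
  obtain ⟨r, hr⟩ : ∃ m, m = ⌈E * (M / t)⌉₊ := ⟨_, rfl⟩
  have hrl : E * (M / t) ≤ r := hr ▸ Nat.le_ceil _
  have hMt : 1 ≤ (M:ℝ) / t := (one_le_div ht0).2 htM
  have hru : (r:ℝ) ≤ q / ℓ ^ 2 := by
    have e1 := (Nat.ceil_lt_add_one (show 0 ≤ E * (M / t) by positivity)).le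
    rw [← hr] at e1
    have e2 : 1 ≤ E * (M / t) := one_le_mul_of_one_le_of_one_le he31 hMt
    have e3 : (M:ℝ) / t ≤ 16 * q ^ 2 / (650 * q * ℓ ^ 2) := by
      rw [hMr]; gcongr
    have e4 : 16 * (q:ℝ) ^ 2 / (650 * q * ℓ ^ 2) = 16 / 650 * (q / ℓ ^ 2) := by
      field_simp
    have e5 : 0 ≤ q / ℓ ^ 2 := by positivity
    calc (r:ℝ) ≤ 2 * (E * (M / t)) := by linarith
      _ ≤ 2 * ((101 / 5) * (16 / 650 * (q / ℓ ^ 2))) := by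
          have e6 : (M:ℝ) / t ≤ 16 / 650 * (q / ℓ ^ 2) := e3.trans e4.le
          have e7 := mul_le_mul he3 e6 (by linarith) (by norm_num)
          linarith
      _ ≤ q / ℓ ^ 2 := by linarith
  have hr1 : 1 ≤ r := by
    have : (1:ℝ) ≤ r := le_trans (one_le_mul_of_one_le_of_one_le he31 hMt) hrl
    exact_mod_cast this
  have hrpos : (0:ℝ) < r := by exact_mod_cast hr1
  have hrq : (r:ℝ) ≤ q := hru.trans (div_le_self hq0.le hℓ2)
  have hret : (r:ℝ) < Real.exp t := by
    have := Real.add_one_le_exp (t:ℝ)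
    linarith
  have hlt : (T.card : ℝ) * r < (r:ℝ) ^ t := by
    have hlt0 : 0 < l ^ t := by rw [hl]; positivity
    have e1 : Real.exp (3 * t) ≤ (r:ℝ) ^ t * l ^ t := by
      rw [← mul_pow]
      rw [heE]
      apply pow_le_pow_left₀ (by positivity)
      calc E = E * (M / t) * l := by rw [hl]; field_simp
        _ ≤ _ := by gcongr
    have e2 : (T.card : ℝ) * r * l ^ t < (r:ℝ) ^ t * l ^ t := by
      calc (T.card : ℝ) * r * l ^ t = (T.card : ℝ) * l ^ t * r := by ring
        _ ≤ Real.exp (2 * t) * r := by gcongr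
        _ < Real.exp (2 * t) * Real.exp t := by gcongr
        _ = Real.exp (3 * t) := by rw [← Real.exp_add]; ring_nf
        _ ≤ _ := e1
    exact lt_of_mul_lt_mul_right e2 hlt0.le
  obtain ⟨U, hUc, hUT⟩ := exists_part T t r hr1 (fun I hI => (mem_filter.1 hI).2) hlt
  refine ⟨L, hL, G, U, bipGraph_K4_free hU χ, ?_, ?_⟩
  · have e1 : (q:ℝ) ^ 4 ≤ 2 * (r * U.card) := by
      have := hU.card_lines_ge.trans (Nat.mul_le_mul_left 2 hUc)
      exact_mod_cast this
    have hu0 : (0:ℝ) ≤ U.card := Nat.cast_nonneg _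
    generalize (U.card : ℝ) = u at e1 hu0 ⊢
    have e2 : (q:ℝ) ^ 4 ≤ 2 * (q / ℓ ^ 2 * u) := by
      refine e1.trans ?_
      have := mul_le_mul_of_nonneg_right hru hu0
      linarith
    have e3 : (q:ℝ) * (q ^ 3 * ℓ ^ 2 / 2) ≤ q * u := by
      have : 2 * (q / ℓ ^ 2 * u) = q * u * (2 / ℓ ^ 2) := by ring
      rw [this] at e2
      have e4 := mul_le_mul_of_nonneg_right e2 (show 0 ≤ ℓ ^ 2 / 2 by positivity)
      have e5 : q * u * (2 / ℓ ^ 2) * (ℓ ^ 2 / 2) = (q:ℝ) * u := by field_simp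
      rw [e5] at e4
      linarith
    exact le_of_mul_le_mul_left e3 hq0
  · intro I hI
    by_contra hcon
    push Not at hcon
    have hIt : t ≤ I.card := by rw [ht]; exact Nat.ceil_le.2 hcon.le
    obtain ⟨J, hJI, hJ⟩ := exists_subset_card_eq hIt
    rw [mem_indSets] at hI
    refine hUT J ?_ (hJI.trans hI.1)
    rw [hT, mem_filter, mem_indSets]
    exact ⟨⟨subset_univ _, fun u hu v hv => hI.2 u (hJI hu) v (hJI hv)⟩, hJ⟩

/-! ### Both bounds for every large `n` -/

lemma exists_graph_of_prime (q n : ℕ) (hq : q.Prime) (h1 : 1 ≤ Real.log q)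
    (h2 : 700 * Real.log q ^ 2 ≤ q) (hn : (n:ℝ) ≤ (q:ℝ) ^ 3 * Real.log q ^ 2 / 2) :
    ∃ G : SimpleGraph (Fin n), ¬ ContainsCopy (⊤ : SimpleGraph (Fin 4)) G ∧
      ∀ I ∈ indSets G univ, (I.card : ℝ) ≤ 650 * q * Real.log q ^ 2 := by
  obtain ⟨V, _, G, U, hK, hU, hI⟩ := exists_K4_free_of_prime q hq h1 h2
  have hnU : n ≤ U.card := by exact_mod_cast hn.trans hU
  obtain ⟨e⟩ : Nonempty (Fin n ↪ U) := by
    apply Function.Embedding.nonempty_of_card_le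
    simpa using hnU
  let g : Fin n ↪ V := e.trans (Function.Embedding.subtype _)
  have hg : ∀ i, g i ∈ U := fun i => (e i).2
  refine ⟨G.comap g, ?_, ?_⟩
  · rintro ⟨f, hf, hadj⟩
    exact hK ⟨g ∘ f, g.injective.comp hf, fun a b hab => hadj hab⟩
  · intro I hIn
    rw [mem_indSets] at hIn
    have := hI (I.map g) (by
      rw [mem_indSets]
      refine ⟨fun u hu => ?_, fun u hu v hv => ?_⟩
      · obtain ⟨i, -, rfl⟩ := mem_map.1 hu
        exact hg i
      · obtain ⟨i, hi, rfl⟩ := mem_map.1 hu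
        obtain ⟨j, hj, rfl⟩ := mem_map.1 hv
        exact hIn.2 i hi j hj)
    rwa [card_map] at this

lemma eventually_log_sq : ∃ N : ℕ, ∀ n : ℕ, n > N →
    4 ≤ Real.log n ∧ 700 * Real.log n ^ 2 ≤ (n:ℝ) ^ ((1:ℝ)/4) := by
  have h1 : ∀ᶠ x : ℝ in Filter.atTop, 4 ≤ Real.log x :=
    Real.tendsto_log_atTop.eventually_ge_atTop 4
  have h2 := (isLittleO_log_rpow_atTop (show (0:ℝ) < 1/8 by norm_num)).bound
    (show (0:ℝ) < 1/27 by norm_num)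
  obtain ⟨N, hN⟩ := Filter.eventually_atTop.1 (tendsto_natCast_atTop_atTop.eventually
    (h1.and (h2.and (Filter.eventually_gt_atTop 0))))
  refine ⟨N, fun n hn => ?_⟩
  obtain ⟨a, b, c⟩ := hN n hn.le
  refine ⟨a, ?_⟩
  rw [Real.norm_eq_abs, Real.norm_eq_abs, abs_of_nonneg (by linarith),
    abs_of_nonneg (by positivity)] at b
  have e : (n:ℝ) ^ ((1:ℝ)/4) = ((n:ℝ) ^ ((1:ℝ)/8)) ^ 2 := by
    rw [← Real.rpow_natCast, ← Real.rpow_mul c.le]; norm_num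
  rw [e]
  nlinarith

/-- A prime `q` of order `(n / (log n)²)^{1/3}` is chosen by Bertrand's postulate. -/
theorem exists_K4_free_graph : ∃ N : ℕ, ∀ n : ℕ, n > N → 4 ≤ Real.log n ∧
    ∃ G : SimpleGraph (Fin n), ¬ ContainsCopy (⊤ : SimpleGraph (Fin 4)) G ∧
      ∀ I ∈ indSets G univ, (I.card : ℝ) ≤
        6500 * ((n:ℝ) ^ ((1:ℝ)/3) * Real.log n ^ ((4:ℝ)/3)) := by
  obtain ⟨N, hN⟩ := eventually_log_sq
  refine ⟨N, fun n hn => ?_⟩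
  obtain ⟨h4, h700⟩ := hN n hn
  refine ⟨h4, ?_⟩
  have hn1 : 1 ≤ n := by omega
  have hn0 : (0:ℝ) < n := by exact_mod_cast hn1
  obtain ⟨ℓ, hℓ⟩ : ∃ ℓ, ℓ = Real.log n := ⟨_, rfl⟩
  rw [← hℓ] at h4 h700 ⊢
  have hℓ0 : 0 < ℓ := by linarith
  obtain ⟨s, hs⟩ : ∃ s, s = (n:ℝ) ^ ((1:ℝ)/4) := ⟨_, rfl⟩
  rw [← hs] at h700
  have hs1 : 11200 ≤ s := by nlinarith
  have hs4 : s ^ 4 = n := by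
    rw [hs, ← Real.rpow_natCast, ← Real.rpow_mul hn0.le]; norm_num
  obtain ⟨y, hy⟩ : ∃ y, y = ((n:ℝ) / ℓ ^ 2) ^ ((1:ℝ)/3) := ⟨_, rfl⟩
  have hy0 : 0 ≤ y := by rw [hy]; positivity
  have hy3 : y ^ 3 = n / ℓ ^ 2 := by
    rw [hy, ← Real.rpow_natCast, ← Real.rpow_mul (by positivity)]; norm_num
  have hy3' : y ^ 3 * ℓ ^ 2 = n := by rw [hy3]; field_simp
  have hys : s ≤ y := by
    have : s ^ 3 ≤ y ^ 3 := by
      rw [hy3, le_div_iff₀ (by positivity), ← hs4]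
      have : 0 ≤ s ^ 3 := by positivity
      nlinarith
    exact (pow_le_pow_iff_left₀ (by linarith) hy0 (by norm_num)).1 this
  have hyn : 10 * y ≤ n := by
    have : y ^ 3 ≤ n := by
      rw [← hy3']
      exact le_mul_of_one_le_right (by positivity) (by nlinarith)
    nlinarith [mul_nonneg hy0 hy0]
  -- The prime satisfies `4 y < q ≤ 10 y`, and `log q` is at least `log n / 4`.
  obtain ⟨q, hqp, hQq, hqQ⟩ := Nat.exists_prime_lt_and_le_two_mul ⌈4 * y⌉₊ (by
    have : 0 < ⌈4 * y⌉₊ := Nat.ceil_pos.2 (by linarith)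
    omega)
  have hq4 : 4 * y ≤ q := (Nat.le_ceil _).trans (by exact_mod_cast hQq.le)
  have hq10 : (q:ℝ) ≤ 10 * y := by
    have e1 := (Nat.ceil_lt_add_one (show 0 ≤ 4 * y by linarith)).le
    have e2 : (q:ℝ) ≤ 2 * (⌈4 * y⌉₊ : ℝ) := by exact_mod_cast hqQ
    linarith
  have hq0 : (0:ℝ) < q := by linarith
  have hlq : Real.log q ≤ ℓ := by
    rw [hℓ]; exact Real.log_le_log hq0 (hq10.trans hyn)
  have hlq2 : ℓ / 4 ≤ Real.log q := by
    have e1 : Real.log s = ℓ / 4 := by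
      rw [hs, Real.log_rpow hn0, hℓ]; ring
    rw [← e1]
    exact Real.log_le_log (by linarith) (by linarith)
  have hlq1 : 1 ≤ Real.log q := by linarith
  have hsq : Real.log q ^ 2 ≤ ℓ ^ 2 := pow_le_pow_left₀ (by linarith) hlq 2
  obtain ⟨G, hK, hI⟩ := exists_graph_of_prime q n hqp hlq1 (by linarith) (by
    have e1 : (4 * y) ^ 3 ≤ (q:ℝ) ^ 3 := pow_le_pow_left₀ (by linarith) hq4 3
    have e2 : (ℓ / 4) ^ 2 ≤ Real.log q ^ 2 := pow_le_pow_left₀ (by linarith) hlq2 2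
    have e3 := mul_le_mul e1 e2 (by positivity) (by positivity)
    nlinarith)
  refine ⟨G, hK, fun I hIn => (hI I hIn).trans ?_⟩
  have e1 : (q:ℝ) * Real.log q ^ 2 ≤ 10 * y * ℓ ^ 2 := mul_le_mul hq10 hsq (by positivity)
    (by linarith)
  have e2 : y * ℓ ^ 2 = (n:ℝ) ^ ((1:ℝ)/3) * ℓ ^ ((4:ℝ)/3) := by
    rw [hy, Real.div_rpow hn0.le (by positivity), ← Real.rpow_natCast ℓ 2,
      ← Real.rpow_mul hℓ0.le, div_mul_eq_mul_div, mul_div_assoc, ← Real.rpow_sub hℓ0]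
    norm_num
  rw [← e2]
  linarith

lemma cycle_adj {l : ℕ} (hl : 3 ≤ l) : ∃ a b, (SimpleGraph.cycleGraph l).Adj a b := by
  obtain ⟨m, rfl⟩ : ∃ m, l = m + 2 := ⟨l - 2, by omega⟩
  exact ⟨1, 0, by rw [SimpleGraph.cycleGraph_adj]; left; simp⟩

/-- The supremum defining `fIndepNum` is attained, and it bounds the size of independent sets. -/
lemma fIndepNum_spec {n l : ℕ} (hl : 3 ≤ l) (G : SimpleGraph (Fin n)) :
    (∃ S : Finset (Fin n), S.card = fIndepNum (SimpleGraph.cycleGraph l) G ∧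
      ¬ ContainsCopy (SimpleGraph.cycleGraph l) (G.induce (S : Set (Fin n)))) ∧
    ∀ I ∈ indSets G univ, I.card ≤ fIndepNum (SimpleGraph.cycleGraph l) G := by
  have hb : BddAbove {k | ∃ S : Finset (Fin n), S.card = k ∧
      ¬ ContainsCopy (SimpleGraph.cycleGraph l) (G.induce (S : Set (Fin n)))} := by
    refine ⟨n, ?_⟩
    rintro k ⟨S, rfl, -⟩
    simpa using card_le_univ S
  have hne : {k | ∃ S : Finset (Fin n), S.card = k ∧
      ¬ ContainsCopy (SimpleGraph.cycleGraph l) (G.induce (S : Set (Fin n)))}.Nonempty := by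
    refine ⟨0, ∅, card_empty, ?_⟩
    rintro ⟨f, -, -⟩
    have := (f ⟨0, by omega⟩).2
    simp at this
  constructor
  · exact Nat.sSup_mem hne hb
  · intro I hI
    rw [mem_indSets] at hI
    refine le_csSup hb ⟨I, rfl, ?_⟩
    rintro ⟨f, -, hadj⟩
    obtain ⟨a, b, hab⟩ := cycle_adj hl
    exact hI.2 _ (f a).2 _ (f b).2 (hadj hab)

lemma minFIndep_upper (k : ℕ) (hk : 2 ≤ k) (l : ℕ) (hl : 2 * k - 1 ≤ l) (hl2 : l ≤ 2 * k)
    (n : ℕ) (hn : 4 ≤ Real.log n) (hn1 : 1 ≤ n) (G : SimpleGraph (Fin n))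
    (hK : ¬ ContainsCopy (⊤ : SimpleGraph (Fin 4)) G)
    (hI : ∀ I ∈ indSets G univ, (I.card : ℝ) ≤
        6500 * ((n:ℝ) ^ ((1:ℝ)/3) * Real.log n ^ ((4:ℝ)/3))) :
    (minFIndep (SimpleGraph.cycleGraph l) (⊤ : SimpleGraph (Fin 4)) n : ℝ) ≤
      ((2 * k) ^ (k - 1) * (2 * k + 2) * (6500:ℝ) ^ ((k:ℝ) / (k - 1))) *
        (n : ℝ) ^ ((k : ℝ) / (3 * k - 3)) * Real.log n ^ ((4 * k : ℝ) / (3 * k - 3)) := by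
  have h1 : minFIndep (SimpleGraph.cycleGraph l) (⊤ : SimpleGraph (Fin 4)) n ≤
      fIndepNum (SimpleGraph.cycleGraph l) G := Nat.sInf_le ⟨G, hK, rfl⟩
  obtain ⟨⟨S, hS, hC⟩, -⟩ := fIndepNum_spec (l := l) (by omega) G
  rw [← hS] at h1
  have hnr : (1:ℝ) ≤ n := by exact_mod_cast hn1
  have hkr : (0:ℝ) < (k:ℝ) - 1 := by
    have : (2:ℝ) ≤ k := by exact_mod_cast hk
    linarith
  have ht1 : 1 ≤ (n:ℝ) ^ ((1:ℝ)/3) * Real.log n ^ ((4:ℝ)/3) :=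
    one_le_mul_of_one_le_of_one_le (Real.one_le_rpow hnr (by norm_num))
      (Real.one_le_rpow (by linarith) (by norm_num))
  have h2 := cycle_ramsey k hk G l hl hl2
    (6500 * ((n:ℝ) ^ ((1:ℝ)/3) * Real.log n ^ ((4:ℝ)/3))) (by linarith) S
    (fun h => hC (containsCopy_of_hasCycle h)) (fun I hIS => hI I (by
      rw [mem_indSets] at hIS ⊢; exact ⟨subset_univ _, hIS.2⟩))
  have hlog0 : 0 ≤ Real.log n := by linarith
  have h3 : (6500 * ((n:ℝ) ^ ((1:ℝ)/3) * Real.log n ^ ((4:ℝ)/3))) ^ ((k:ℝ)/(k-1)) =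
      (6500:ℝ) ^ ((k:ℝ) / (k - 1)) * ((n : ℝ) ^ ((k : ℝ) / (3 * k - 3)) *
        Real.log n ^ ((4 * k : ℝ) / (3 * k - 3))) := by
    rw [Real.mul_rpow (by norm_num) (by positivity), Real.mul_rpow (by positivity) (by positivity),
      ← Real.rpow_mul (by linarith), ← Real.rpow_mul hlog0]
    have e : (3 * (k:ℝ) - 3) = 3 * (k - 1) := by ring
    rw [e]
    congr 3
    · field_simp
    · field_simp
  rw [h3] at h2
  calc (minFIndep (SimpleGraph.cycleGraph l) (⊤ : SimpleGraph (Fin 4)) n : ℝ) ≤ S.card := by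
        exact_mod_cast h1
    _ ≤ _ := h2
    _ = _ := by ring

lemma minFIndep_lower (l : ℕ) (hl : 3 ≤ l) (n : ℕ) (m : ℝ)
    (h : ∀ G : SimpleGraph (Fin n), ¬ ContainsCopy (⊤ : SimpleGraph (Fin 4)) G →
      ∃ I : Finset (Fin n), (∀ u ∈ I, ∀ v ∈ I, ¬ G.Adj u v) ∧ m ≤ 128 * I.card) :
    1 / 128 * m ≤ minFIndep (SimpleGraph.cycleGraph l) (⊤ : SimpleGraph (Fin 4)) n := by
  have hne : {k | ∃ G : SimpleGraph (Fin n), ¬ ContainsCopy (⊤ : SimpleGraph (Fin 4)) G ∧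
      fIndepNum (SimpleGraph.cycleGraph l) G = k}.Nonempty := by
    refine ⟨_, ⊥, ?_, rfl⟩
    rintro ⟨f, -, hadj⟩
    exact hadj (a := 0) (b := 1) (by simp)
  obtain ⟨G, hK, hG⟩ : ∃ G : SimpleGraph (Fin n), ¬ ContainsCopy (⊤ : SimpleGraph (Fin 4)) G ∧
      fIndepNum (SimpleGraph.cycleGraph l) G =
        minFIndep (SimpleGraph.cycleGraph l) (⊤ : SimpleGraph (Fin 4)) n :=
    Nat.sInf_mem hne
  obtain ⟨I, hI, hm⟩ := h G hK
  have h1 := (fIndepNum_spec hl G).2 I (mem_indSets.2 ⟨subset_univ _, hI⟩)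
  rw [hG] at h1
  have h2 : (I.card : ℝ) ≤ minFIndep (SimpleGraph.cycleGraph l) (⊤ : SimpleGraph (Fin 4)) n := by
    exact_mod_cast h1
  linarith

end ER

theorem stmt13 (k : ℕ) (hk : 2 ≤ k) :
    ∃ (c C : ℝ) (N : ℕ), 0 < c ∧ 0 < C ∧ ∀ n : ℕ, n > N →
      (c * (n : ℝ) ^ ((1 : ℝ) / 3) * Real.log n ^ ((2 : ℝ) / 3) ≤
          minFIndep (SimpleGraph.cycleGraph (2 * k)) (⊤ : SimpleGraph (Fin 4)) n ∧
        (minFIndep (SimpleGraph.cycleGraph (2 * k)) (⊤ : SimpleGraph (Fin 4)) n : ℝ) ≤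
          C * (n : ℝ) ^ ((k : ℝ) / (3 * k - 3)) * Real.log n ^ ((4 * k : ℝ) / (3 * k - 3))) ∧
      (c * (n : ℝ) ^ ((1 : ℝ) / 3) * Real.log n ^ ((2 : ℝ) / 3) ≤
          minFIndep (SimpleGraph.cycleGraph (2 * k - 1)) (⊤ : SimpleGraph (Fin 4)) n ∧
        (minFIndep (SimpleGraph.cycleGraph (2 * k - 1)) (⊤ : SimpleGraph (Fin 4)) n : ℝ) ≤
          C * (n : ℝ) ^ ((k : ℝ) / (3 * k - 3)) * Real.log n ^ ((4 * k : ℝ) / (3 * k - 3))) := by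
  obtain ⟨N1, h1⟩ := ER.exists_ind_K4_free
  obtain ⟨N2, h2⟩ := ER.exists_K4_free_graph
  refine ⟨1 / 128, (2 * k) ^ (k - 1) * (2 * k + 2) * (6500:ℝ) ^ ((k:ℝ) / (k - 1)), max N1 N2,
    by norm_num, by positivity, fun n hn => ?_⟩
  have hlow := h1 n (lt_of_le_of_lt (le_max_left _ _) hn)
  obtain ⟨h4, G, hK, hI⟩ := h2 n (lt_of_le_of_lt (le_max_right _ _) hn)
  have hn1 : 1 ≤ n := by omega
  rw [mul_assoc]
  exact ⟨⟨ER.minFIndep_lower _ (by omega) n _ hlow,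
      ER.minFIndep_upper k hk _ (by omega) le_rfl n h4 hn1 G hK hI⟩,
    ER.minFIndep_lower _ (by omega) n _ hlow,
      ER.minFIndep_upper k hk _ le_rfl (by omega) n h4 hn1 G hK hI⟩
end

section
/- Let r ≥ 2 be an integer and let F be a bipartite graph with parts X and Y such that F contains no subgraph isomorphic to C_4, and there do not exist distinct vertices x_1, x_2, x_3, x_4 ∈ X and distinct vertices y_{ij} ∈ Y (for 1 ≤ i < j ≤ 4) such that x_i y_{ij} and x_j y_{ij} are edges of F for all 1 ≤ i < j ≤ 4. For each y ∈ Y, fix a partition of the neighborhood N_F(y) into r parts S_1(y),…,S_r(y). Let H be the graph on vertex set X in which x_1 and x_2 are adjacent if and only if there exist y ∈ Y and indices i ≠ j with x_1 ∈ S_i(y) and x_2 ∈ S_j(y). Then H contains no subgraph isomorphic to K_{r+2}. -/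
/-- Four points, any two on a common line and no three collinear, are the branch vertices of a
subdivided `K₄`. -/
theorem not_quadrangle {X Y : Type*} {E : X → Y → Prop}
    (hK4sub : ¬ ∃ (x : Fin 4 → X) (y : Fin 4 → Fin 4 → Y),
      Function.Injective x ∧
      (∀ i j, i < j → E (x i) (y i j) ∧ E (x j) (y i j)) ∧
      (∀ i j k l, i < j → k < l → (i, j) ≠ (k, l) → y i j ≠ y k l))
    (x : Fin 4 → X) (hx : Function.Injective x)
    (hj : ∀ i j, i ≠ j → ∃ y, E (x i) y ∧ E (x j) y)
    (hn : ∀ i j k, i ≠ j → i ≠ k → j ≠ k → ∀ y, E (x i) y → E (x j) y → E (x k) y → False) :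
    False := by
  have hj' : ∀ i j, ∃ y, i ≠ j → E (x i) y ∧ E (x j) y := by
    intro i j
    by_cases h : i = j
    · obtain ⟨y, -⟩ := hj 0 1 (by decide)
      exact ⟨y, fun h' => absurd h h'⟩
    · obtain ⟨y, hy⟩ := hj i j h
      exact ⟨y, fun _ => hy⟩
  choose y hy using hj'
  refine hK4sub ⟨x, y, hx, fun i j hij => hy i j hij.ne, ?_⟩
  intro i j k l hij hkl hne he
  obtain ⟨h1, h2⟩ := hy i j hij.ne
  obtain ⟨h3, h4⟩ := hy k l hkl.ne
  rw [← he] at h3 h4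
  -- Two distinct pairs span at least three points, all of which lie on the shared line.
  by_cases hik : i = k
  · subst hik
    have hjl : j ≠ l := fun h => hne (by rw [h])
    exact hn i j l hij.ne hkl.ne hjl _ h1 h2 h4
  · by_cases hjk : j = k
    · subst hjk
      exact hn i j l hij.ne (hij.trans hkl).ne hkl.ne _ h1 h2 h4
    · exact hn i j k hij.ne hik hjk _ h1 h2 h3

theorem not_three_of_four (P : Fin 4 → Prop) (h012 : P 0 → P 1 → ¬ P 2)
    (h013 : P 0 → P 1 → ¬ P 3) (h023 : P 0 → P 2 → ¬ P 3) (h123 : P 1 → P 2 → ¬ P 3)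
    (i j k : Fin 4) (hij : i ≠ j) (hik : i ≠ k) (hjk : j ≠ k) (hi : P i) (hj : P j) (hk : P k) :
    False := by
  fin_cases i <;> fin_cases j <;> fin_cases k <;> simp_all

/-- Two points `a`, `b` on a line `w` and two points `p`, `q` off it, with `a`, `b` off the
line `z` through `p` and `q`, have no three collinear. -/
theorem not_two_off_line {X Y : Type*} {E : X → Y → Prop}
    (hC4 : ∀ x₁ x₂ y₁ y₂, x₁ ≠ x₂ → y₁ ≠ y₂ →
      E x₁ y₁ → E x₁ y₂ → E x₂ y₁ → E x₂ y₂ → False)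
    (hK4sub : ¬ ∃ (x : Fin 4 → X) (y : Fin 4 → Fin 4 → Y),
      Function.Injective x ∧
      (∀ i j, i < j → E (x i) (y i j) ∧ E (x j) (y i j)) ∧
      (∀ i j k l, i < j → k < l → (i, j) ≠ (k, l) → y i j ≠ y k l))
    {ι : Type*} (f : ι → X) (hf : Function.Injective f)
    (hjoin : ∀ i j, i ≠ j → ∃ y, E (f i) y ∧ E (f j) y)
    {a b p q : ι} (hab : a ≠ b) (hpq : p ≠ q) {w z : Y}
    (haw : E (f a) w) (hbw : E (f b) w) (hpw : ¬ E (f p) w) (hqw : ¬ E (f q) w)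
    (hpz : E (f p) z) (hqz : E (f q) z) (haz : ¬ E (f a) z) (hbz : ¬ E (f b) z) : False := by
  have hw : ∀ y, E (f a) y → E (f b) y → y = w := fun y h1 h2 => by
    by_contra h
    exact hC4 _ _ _ _ (hf.ne hab) h h1 haw h2 hbw
  have hz : ∀ y, E (f p) y → E (f q) y → y = z := fun y h1 h2 => by
    by_contra h
    exact hC4 _ _ _ _ (hf.ne hpq) h h1 hpz h2 hqz
  have hap : a ≠ p := fun h => hpw (h ▸ haw)
  have haq : a ≠ q := fun h => hqw (h ▸ haw)
  have hbp : b ≠ p := fun h => hpw (h ▸ hbw)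
  have hbq : b ≠ q := fun h => hqw (h ▸ hbw)
  have hinj : Function.Injective ![a, b, p, q] := by
    clear hw hz hC4 hK4sub hjoin
    intro i j h
    fin_cases i <;> fin_cases j <;> simp_all
  refine not_quadrangle hK4sub (fun i => f (![a, b, p, q] i)) (hf.comp hinj)
    (fun i j hij => hjoin _ _ (hinj.ne hij)) ?_
  intro i j k hij hik hjk y h1 h2 h3
  exact not_three_of_four (fun i => E (f (![a, b, p, q] i)) y)
    (fun h h' => hw y h h' ▸ hpw) (fun h h' => hw y h h' ▸ hqw)
    (fun h h' h'' => haz (hz y h' h'' ▸ h)) (fun h h' h'' => hbz (hz y h' h'' ▸ h))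
    i j k hij hik hjk h1 h2 h3

theorem stmt14 {X Y : Type*} (r : ℕ) (hr : 2 ≤ r) (E : X → Y → Prop)
    -- `F` (given by the bipartite relation `E`) is `C₄`-free:
    (hC4 : ∀ x₁ x₂ y₁ y₂, x₁ ≠ x₂ → y₁ ≠ y₂ →
      E x₁ y₁ → E x₁ y₂ → E x₂ y₁ → E x₂ y₂ → False)
    -- `F` contains no subdivision of `K₄` with the four branch vertices in `X`:
    (hK4sub : ¬ ∃ (x : Fin 4 → X) (y : Fin 4 → Fin 4 → Y),
      Function.Injective x ∧
      (∀ i j, i < j → E (x i) (y i j) ∧ E (x j) (y i j)) ∧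
      (∀ i j k l, i < j → k < l → (i, j) ≠ (k, l) → y i j ≠ y k l))
    -- a partition of each neighbourhood `N_F(y)` into `r` parts, where
    -- `S i y = {x | E x y ∧ part y x = i}`:
    (part : Y → X → Fin r)
    -- `H` is the graph on `X` where `x₁ ~ x₂` iff `x₁ ∈ S i y`, `x₂ ∈ S j y`
    -- for some `y ∈ Y` and `i ≠ j`:
    (H : SimpleGraph X)
    (hH : ∀ x₁ x₂, H.Adj x₁ x₂ ↔
      ∃ (y : Y) (i j : Fin r), i ≠ j ∧
        (E x₁ y ∧ part y x₁ = i) ∧ (E x₂ y ∧ part y x₂ = j)) :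
    ¬ ContainsCopy (⊤ : SimpleGraph (Fin (r + 2))) H := by
  rintro ⟨f, hf, hadj⟩
  have huniq : ∀ i j, i ≠ j → ∀ y y', E (f i) y → E (f j) y → E (f i) y' → E (f j) y' →
      y = y' := by
    intro i j hij y y' h1 h2 h3 h4
    by_contra h
    exact hC4 _ _ _ _ (hf.ne hij) h h1 h3 h2 h4
  have hH' : ∀ i j, i ≠ j → ∃ y, E (f i) y ∧ E (f j) y ∧ part y (f i) ≠ part y (f j) := by
    intro i j hij
    obtain ⟨y, s, t, hst, ⟨h1, h2⟩, h3, h4⟩ := (hH _ _).1 (hadj ((SimpleGraph.top_adj i j).2 hij))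
    exact ⟨y, h1, h3, by rwa [h2, h4]⟩
  have hjoin : ∀ i j, i ≠ j → ∃ y, E (f i) y ∧ E (f j) y := fun i j hij =>
    let ⟨y, h1, h2, _⟩ := hH' i j hij
    ⟨y, h1, h2⟩
  have hpart : ∀ i j, i ≠ j → ∀ y, E (f i) y → E (f j) y → part y (f i) ≠ part y (f j) := by
    intro i j hij y h1 h2
    obtain ⟨y', h3, h4, h5⟩ := hH' i j hij
    rwa [huniq i j hij y y' h1 h2 h3 h4]
  by_cases hcol : ∃ a b c, a ≠ b ∧ a ≠ c ∧ b ≠ c ∧ ∃ w, E (f a) w ∧ E (f b) w ∧ E (f c) w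
  · obtain ⟨a, b, c, hab, hac, hbc, w, ha, hb, hc⟩ := hcol
    classical
    have hle : (Finset.univ.filter fun i => E (f i) w).card ≤ r := by
      have := Finset.card_le_card_of_injOn (s := Finset.univ.filter fun i => E (f i) w)
        (t := (Finset.univ : Finset (Fin r))) (fun i => part w (f i)) (by simp) (by
          intro i hi j hj h
          by_contra hij
          exact hpart i j hij w (by simpa using hi) (by simpa using hj) h)
      simpa using this
    have hsum := Finset.card_filter_add_card_filter_not
      (s := (Finset.univ : Finset (Fin (r + 2)))) (fun i => E (f i) w)
    rw [Finset.card_univ, Fintype.card_fin] at hsum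
    obtain ⟨p, hp, q, hq, hpq⟩ := Finset.one_lt_card.1
      (show 1 < (Finset.univ.filter fun i => ¬ E (f i) w).card by omega)
    have hp : ¬ E (f p) w := by simpa using hp
    have hq : ¬ E (f q) w := by simpa using hq
    obtain ⟨z, hpz, hqz⟩ := hjoin p q hpq
    have hzw : ∀ i j, i ≠ j → E (f i) w → E (f j) w → E (f i) z → ¬ E (f j) z :=
      fun i j hij h1 h2 h3 h4 => hp (huniq i j hij z w h3 h4 h1 h2 ▸ hpz)
    by_cases haz : E (f a) z
    · exact not_two_off_line hC4 hK4sub f hf hjoin hbc hpq hb hc hp hq hpz hqz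
        (hzw a b hab ha hb haz) (hzw a c hac ha hc haz)
    · by_cases hbz : E (f b) z
      · exact not_two_off_line hC4 hK4sub f hf hjoin hac hpq ha hc hp hq hpz hqz
          haz (hzw b c hbc hb hc hbz)
      · exact not_two_off_line hC4 hK4sub f hf hjoin hab hpq ha hb hp hq hpz hqz haz hbz
  · have hinj : Function.Injective (Fin.castLE (show 4 ≤ r + 2 by omega)) :=
      Fin.castLE_injective _
    exact not_quadrangle hK4sub (fun i => f (Fin.castLE (by omega) i)) (hf.comp hinj)
      (fun i j hij => hjoin _ _ (hinj.ne hij))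
      (fun i j k hij hik hjk y h1 h2 h3 =>
        hcol ⟨_, _, _, hinj.ne hij, hinj.ne hik, hinj.ne hjk, y, h1, h2, h3⟩)
end
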